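/- arXiv:0809.3031 — 4 statements merged into one kernel-verified Lean document; each statement's English description precedes it below -/
import Mathlib

section
/- Let H be a semisimple Hopf algebra over ℂ of dimension 60, and let V be a simple left H-module. Then the dimension of V over ℂ divides 60. -/
/-!
Let `S i` be the simple `H`-modules, `d i` their dimensions, and `t i j` the multiplicity of `S j`
in `S i ⊗ V`. Counting dimensions in `S i ⊗ V` gives `∑ j, d j * t i j = d i * dim V`, and
`H ⊗ V ≅ H ^ dim V` gives `∑ i, d i * t i k = d k * dim V`. By duality, `t i j ≠ 0` yields a
surjection `(S i)* ⊗ S j → V`, so `dim V ≤ d i * d j`.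

As `∑ i, d i ^ 2 = 60`, we have `dim V ≤ 7`, and only `dim V = 7` has to be excluded. If `V = S k`
has dimension 7, the other `d i ^ 2` sum to 11, so `d i ≤ 3` for `i ≠ k`, and `7 ≤ d i * d j` forces
`d i = d j = 3`. Hence `t i k = d i` if `d i ≤ 2`, and `3 ∣ t i k` if `d i = 3`. So the sum of
`d i * t i k` over `i ≠ k` is congruent to 11 modulo 9 and at most 11, while it is divisible by 7
since the sum over all `i` is 49.

Multiplicities are ranks of primitive idempotents; traces would determine them only modulo the
characteristic of the field.
-/

open Coalgebra (Repr comul counit)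
open HopfAlgebra (antipode)
open scoped Coalgebra TensorProduct

section SweedlerIdentities

variable {R H ι : Type*} [CommSemiring R] [Semiring H] [HopfAlgebra R H]

theorem sum_antipode_tmul_one_mul_comul {h : H} (r : Repr R h ι) :
    ∑ i ∈ r.index, (antipode R (r.left i) ⊗ₜ[R] (1 : H)) * comul (r.right i) = 1 ⊗ₜ h := by
  let l i := ℛ R (r.left i)
  let s i := ℛ R (r.right i)
  calc ∑ i ∈ r.index, (antipode R (r.left i) ⊗ₜ[R] (1 : H)) * comul (r.right i)
      = ∑ i ∈ r.index, ∑ j ∈ (s i).index,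
          (antipode R (r.left i) * (s i).left j) ⊗ₜ (s i).right j :=
        Finset.sum_congr rfl fun i _ ↦ by simp [← (s i).eq, Finset.mul_sum]
    _ = ∑ i ∈ r.index, ∑ j ∈ (l i).index,
          (antipode R ((l i).left j) * (l i).right j) ⊗ₜ r.right i := by
        have coassoc := congr(((LinearMap.mul' R H ∘ₗ (antipode R).rTensor H).rTensor H)
          ((TensorProduct.assoc R H H H).symm $(Coalgebra.sum_tmul_tmul_eq r l s)))
        simpa only [map_sum, TensorProduct.assoc_symm_tmul, LinearMap.rTensor_tmul,
          LinearMap.comp_apply, LinearMap.mul'_apply] using coassoc.symm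
    _ = ∑ i ∈ r.index, 1 ⊗ₜ (counit (R := R) (r.left i) • r.right i) :=
        Finset.sum_congr rfl fun i _ ↦ by
          rw [← TensorProduct.sum_tmul, HopfAlgebra.sum_antipode_mul_eq_smul,
            TensorProduct.smul_tmul]
    _ = 1 ⊗ₜ h := by rw [← TensorProduct.tmul_sum, Coalgebra.sum_counit_smul]

theorem sum_comul_mul_one_tmul_antipode {h : H} (r : Repr R h ι) :
    ∑ i ∈ r.index, comul (r.left i) * ((1 : H) ⊗ₜ[R] antipode R (r.right i)) = h ⊗ₜ 1 := by
  let l i := ℛ R (r.left i)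
  let s i := ℛ R (r.right i)
  calc ∑ i ∈ r.index, comul (r.left i) * ((1 : H) ⊗ₜ[R] antipode R (r.right i))
      = ∑ i ∈ r.index, ∑ j ∈ (l i).index,
          (l i).left j ⊗ₜ ((l i).right j * antipode R (r.right i)) :=
        Finset.sum_congr rfl fun i _ ↦ by simp [← (l i).eq, Finset.sum_mul]
    _ = ∑ i ∈ r.index, ∑ j ∈ (s i).index,
          r.left i ⊗ₜ ((s i).left j * antipode R ((s i).right j)) := by
        have coassoc := congr(((LinearMap.mul' R H ∘ₗ (antipode R).lTensor H).lTensor H)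
          $(Coalgebra.sum_tmul_tmul_eq r l s))
        simpa only [map_sum, LinearMap.lTensor_tmul, LinearMap.comp_apply,
          LinearMap.mul'_apply] using coassoc
    _ = ∑ i ∈ r.index, (counit (R := R) (r.right i) • r.left i) ⊗ₜ 1 :=
        Finset.sum_congr rfl fun i _ ↦ by
          rw [← TensorProduct.tmul_sum, HopfAlgebra.sum_mul_antipode_eq_smul,
            TensorProduct.smul_tmul]
    _ = h ⊗ₜ 1 := by
        have counital := congr(TensorProduct.rid R H $(Coalgebra.sum_tmul_counit_eq r))
        simp only [map_sum, TensorProduct.rid_tmul, one_smul] at counital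
        rw [← TensorProduct.sum_tmul, counital]

end SweedlerIdentities

section TensorRepresentation

variable {R H A B : Type*} [CommSemiring R] [Semiring H]
  [AddCommMonoid A] [Module R A] [AddCommMonoid B] [Module R B]

/-- The external tensor product of two representations of an algebra `H`, a representation of
`H ⊗ H`. -/
noncomputable def outerTensor [Algebra R H] (ρ : H →ₐ[R] Module.End R A)
    (σ : H →ₐ[R] Module.End R B) : H ⊗[R] H →ₐ[R] Module.End R (A ⊗[R] B) :=
  (Module.endTensorEndAlgHom (S := R)).comp (Algebra.TensorProduct.map ρ σ)

@[simp]
theorem outerTensor_tmul [Algebra R H] (ρ : H →ₐ[R] Module.End R A) (σ : H →ₐ[R] Module.End R B)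
    (x y : H) : outerTensor ρ σ (x ⊗ₜ y) = TensorProduct.map (ρ x) (σ y) :=
  rfl

/-- The tensor product of two representations of a bialgebra, on which `H` acts through its
comultiplication. -/
noncomputable def tensorRep [Bialgebra R H] (ρ : H →ₐ[R] Module.End R A)
    (σ : H →ₐ[R] Module.End R B) : H →ₐ[R] Module.End R (A ⊗[R] B) :=
  (outerTensor ρ σ).comp (Bialgebra.comulAlgHom R H)

theorem tensorRep_apply [Bialgebra R H] (ρ : H →ₐ[R] Module.End R A)
    (σ : H →ₐ[R] Module.End R B) (h : H) :
    tensorRep ρ σ h = outerTensor ρ σ (comul h) :=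
  rfl

variable (R A B) in
/-- Contraction of the first tensor factor with a linear functional: `f, a ⊗ b ↦ f a • b`. -/
noncomputable def contractFst : Module.Dual R A →ₗ[R] A ⊗[R] B →ₗ[R] B :=
  (LinearMap.rTensorHom B).compr₂ (TensorProduct.lid R B).toLinearMap

@[simp]
theorem contractFst_tmul (f : Module.Dual R A) (a : A) (b : B) :
    contractFst R A B f (a ⊗ₜ b) = f a • b := by
  simp [contractFst]

theorem contractFst_comp_apply [Algebra R H] (ρ : H →ₐ[R] Module.End R A)
    (σ : H →ₐ[R] Module.End R B) (f : Module.Dual R A) (h : H) (z : A ⊗[R] B) :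
    contractFst R A B (f ∘ₗ ρ h) z = contractFst R A B f (outerTensor ρ σ (h ⊗ₜ 1) z) := by
  induction z with
  | zero => simp only [map_zero]
  | add x y hx hy => simp only [map_add, hx, hy]
  | tmul a b => simp

theorem apply_contractFst [Algebra R H] (ρ : H →ₐ[R] Module.End R A)
    (σ : H →ₐ[R] Module.End R B) (f : Module.Dual R A) (h : H) (z : A ⊗[R] B) :
    σ h (contractFst R A B f z) = contractFst R A B f (outerTensor ρ σ (1 ⊗ₜ h) z) := by
  induction z with
  | zero => simp only [map_zero]
  | add x y hx hy => simp only [map_add, hx, hy]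
  | tmul a b => simp

-- Contraction `A* ⊗ (A ⊗ B) → B` is `H`-linear, where `H` acts on `A*` through its antipode.
theorem apply_contractFst_eq_sum [HopfAlgebra R H] {ι : Type*} (ρ : H →ₐ[R] Module.End R A)
    (σ : H →ₐ[R] Module.End R B) (f : Module.Dual R A) {h : H} (r : Repr R h ι) (z : A ⊗[R] B) :
    σ h (contractFst R A B f z) = ∑ i ∈ r.index,
      contractFst R A B (f ∘ₗ ρ (antipode R (r.left i))) (tensorRep ρ σ (r.right i) z) := by
  rw [apply_contractFst ρ σ, ← sum_antipode_tmul_one_mul_comul r]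
  simp only [contractFst_comp_apply ρ σ, map_sum, map_mul, LinearMap.sum_apply,
    Module.End.mul_apply, tensorRep_apply]

theorem exists_contractFst_ne_zero [Module.Free R A] {z : A ⊗[R] B} (hz : z ≠ 0) :
    ∃ f : Module.Dual R A, contractFst R A B f z ≠ 0 := by
  classical
  let b := Module.Free.chooseBasis R A
  contrapose! hz
  apply (TensorProduct.equivFinsuppOfBasisLeft b).injective
  ext i
  rw [TensorProduct.equivFinsuppOfBasisLeft_apply, map_zero]
  exact hz (b.coord i)

end TensorRepresentation

section SimpleModule

variable {K H V : Type*} [Field K] [Ring H] [AddCommGroup V] [Module K V] [Module H V]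
  [IsSimpleModule H V]

theorem surjective_of_smul_mem_range {N : Type*} [AddCommMonoid N] [Module K N] (T : N →ₗ[K] V)
    (hT : ∀ (h : H) (x : N), h • T x ∈ LinearMap.range T) (hT0 : T ≠ 0) :
    Function.Surjective T := by
  let W : Submodule H V :=
    { (LinearMap.range T).toAddSubmonoid with
      smul_mem' := by rintro h _ ⟨x, rfl⟩; exact hT h x }
  have mem_W (v : V) : v ∈ W ↔ v ∈ LinearMap.range T := Iff.rfl
  have hW : W ≠ ⊥ := fun hbot ↦ hT0 <| LinearMap.ext fun x ↦
    (Submodule.mem_bot H).1 (hbot ▸ (mem_W (T x)).2 ⟨x, rfl⟩)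
  intro v
  rw [← LinearMap.mem_range, ← mem_W, (eq_bot_or_eq_top W).resolve_left hW]
  trivial

-- A nonzero `T : N → A ⊗ V` is adjoint to a nonzero, hence surjective, `A* ⊗ N → V`.
theorem finrank_le_of_intertwining_tensorRep [HopfAlgebra K H] [IsScalarTower K H V] {A N : Type*}
    [AddCommGroup A] [Module K A] [FiniteDimensional K A] [AddCommGroup N] [Module K N]
    [FiniteDimensional K N]
    (τ : H →ₐ[K] Module.End K N) (ρ : H →ₐ[K] Module.End K A) (T : N →ₗ[K] A ⊗[K] V)
    (hT : ∀ h x, T (τ h x) = tensorRep ρ (Algebra.lsmul K K V) h (T x)) (hT0 : T ≠ 0) :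
    Module.finrank K V ≤ Module.finrank K A * Module.finrank K N := by
  let Φ : Module.Dual K A ⊗[K] N →ₗ[K] V := TensorProduct.lift ((contractFst K A V).compl₂ T)
  have Φ_tmul (f x) : Φ (f ⊗ₜ x) = contractFst K A V f (T x) := by simp [Φ]
  have smul_Φ_mem (h : H) (w) : h • Φ w ∈ LinearMap.range Φ := by
    induction w with
    | zero => simp only [map_zero, smul_zero, zero_mem]
    | add x y hx hy => simpa only [map_add, smul_add] using add_mem hx hy
    | tmul f x =>
      rw [Φ_tmul]
      change Algebra.lsmul K K V h (contractFst K A V f (T x)) ∈ _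
      rw [apply_contractFst_eq_sum ρ _ f (ℛ K h)]
      refine sum_mem fun i _ ↦ ?_
      rw [← hT, ← Φ_tmul]
      exact LinearMap.mem_range_self Φ _
  have Φ_ne_zero : Φ ≠ 0 := by
    obtain ⟨x, hx⟩ := DFunLike.ne_iff.1 hT0
    obtain ⟨f, hf⟩ := exists_contractFst_ne_zero hx
    exact DFunLike.ne_iff.2 ⟨f ⊗ₜ x, by rwa [Φ_tmul]⟩
  have finrank_le := LinearMap.finrank_le_finrank_of_surjective
    (surjective_of_smul_mem_range (H := H) Φ smul_Φ_mem Φ_ne_zero)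
  rwa [Module.finrank_tensorProduct, Subspace.dual_finrank_eq] at finrank_le

end SimpleModule

section RankAdditivity

variable {K M P : Type*} [Field K] [AddCommGroup M] [Module K M] [Fintype P]

theorem finrank_range_eq_sum_of_conj_piMap {N : P → Type*} [∀ p, AddCommGroup (N p)]
    [∀ p, Module K (N p)] [∀ p, FiniteDimensional K (N p)] (φ : M ≃ₗ[K] Π p, N p)
    (f : Module.End K M) (g : ∀ p, Module.End K (N p)) (hφ : ∀ x p, φ (f x) p = g p (φ x p)) :
    Module.finrank K (LinearMap.range f) = ∑ p, Module.finrank K (LinearMap.range (g p)) := by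
  let Φ : (Π p, LinearMap.range (g p)) →ₗ[K] M :=
    φ.symm.toLinearMap ∘ₗ LinearMap.piMap fun p ↦ (LinearMap.range (g p)).subtype
  have φ_Φ (y p) : φ (Φ y) p = y p := by simp [Φ]
  have Φ_injective : Function.Injective Φ := fun y y' h ↦ by
    ext p
    rw [← φ_Φ, h, φ_Φ]
  have range_Φ : LinearMap.range Φ = LinearMap.range f := by
    ext x
    constructor
    · rintro ⟨y, rfl⟩
      choose z hz using fun p ↦ (y p).2
      refine ⟨φ.symm z, φ.injective <| funext fun p ↦ ?_⟩
      rw [hφ, φ.apply_symm_apply, hz, φ_Φ]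
    · rintro ⟨x, rfl⟩
      refine ⟨fun p ↦ ⟨g p (φ x p), _, rfl⟩, φ.injective <| funext fun p ↦ ?_⟩
      rw [φ_Φ, hφ]
  rw [← range_Φ, LinearMap.finrank_range_of_inj Φ_injective, Module.finrank_pi_fintype]

theorem finrank_eq_sum_of_completeOrthogonalIdempotents [FiniteDimensional K M]
    {f : P → Module.End K M} (hf : CompleteOrthogonalIdempotents f) :
    Module.finrank K M = ∑ p, Module.finrank K (LinearMap.range (f p)) := by
  classical
  let Φ : M ≃ₗ[K] Π p, LinearMap.range (f p) :=
    { LinearMap.pi fun p ↦ (f p).rangeRestrict with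
      invFun y := ∑ p, (y p : M)
      left_inv x := by simpa using congr($hf.complete x)
      right_inv y := by
        choose z hz using fun p ↦ (y p).2
        ext p
        have apply_z (i) : f p (f i (z i)) = if p = i then f p (z p) else 0 := by
          rw [← Module.End.mul_apply, hf.mul_eq]
          split_ifs with h
          · rw [h]
          · rfl
        simp [← hz, apply_z] }
  rw [Φ.finrank_eq, Module.finrank_pi_fintype]

end RankAdditivity

section RegularRepresentation

variable {K H B : Type*} [Field K] [Ring H] [HopfAlgebra K H] [AddCommGroup B] [Module K B]

/-- The map `H ⊗ B → H ⊗ B`, `k ⊗ b ↦ k₁ ⊗ k₂ b`, which intertwines the action of `H` on the first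
factor with the diagonal action. -/
noncomputable def coactRegular (σ : H →ₐ[K] Module.End K B) : H ⊗[K] B →ₗ[K] H ⊗[K] B :=
  TensorProduct.lift <| LinearMap.mk₂ K
    (fun k b ↦ outerTensor (Algebra.lmul K H) σ (comul k) (1 ⊗ₜ b))
    (fun _ _ _ ↦ by simp) (fun _ _ _ ↦ by simp) (fun _ _ _ ↦ by simp [TensorProduct.tmul_add])
    (fun _ _ _ ↦ by simp)

@[simp]
theorem coactRegular_tmul (σ : H →ₐ[K] Module.End K B) (k : H) (b : B) :
    coactRegular σ (k ⊗ₜ b) = outerTensor (Algebra.lmul K H) σ (comul k) (1 ⊗ₜ b) := by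
  simp [coactRegular]

theorem tensorRep_lmul_coactRegular (σ : H →ₐ[K] Module.End K B) (h : H) (z : H ⊗[K] B) :
    tensorRep (Algebra.lmul K H) σ h (coactRegular σ z) =
      coactRegular σ ((Algebra.lmul K H h).rTensor B z) := by
  induction z with
  | zero => simp only [map_zero]
  | add x y hx hy => simp only [map_add, hx, hy]
  | tmul k b =>
    rw [LinearMap.rTensor_tmul, Algebra.coe_lmul_eq_mul, LinearMap.mul_apply', coactRegular_tmul,
      coactRegular_tmul, tensorRep_apply, Bialgebra.comul_mul, map_mul, Module.End.mul_apply]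

theorem coactRegular_surjective (σ : H →ₐ[K] Module.End K B) :
    Function.Surjective (coactRegular σ) := by
  rw [← LinearMap.range_eq_top, eq_top_iff, ← TensorProduct.span_tmul_eq_top, Submodule.span_le]
  rintro _ ⟨k, b, rfl⟩
  let r := ℛ K k
  refine ⟨∑ i ∈ r.index, r.left i ⊗ₜ σ (antipode K (r.right i)) b, ?_⟩
  calc coactRegular σ (∑ i ∈ r.index, r.left i ⊗ₜ σ (antipode K (r.right i)) b)
      = outerTensor (Algebra.lmul K H) σ
          (∑ i ∈ r.index, comul (r.left i) * ((1 : H) ⊗ₜ antipode K (r.right i))) (1 ⊗ₜ b) := by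
        simp
    _ = k ⊗ₜ b := by
        rw [sum_comul_mul_one_tmul_antipode]
        simp

theorem finrank_range_tensorRep_lmul [FiniteDimensional K H] [FiniteDimensional K B]
    (σ : H →ₐ[K] Module.End K B) (h : H) :
    Module.finrank K (LinearMap.range (tensorRep (Algebra.lmul K H) σ h)) =
      Module.finrank K (LinearMap.range (Algebra.lmul K H h)) * Module.finrank K B := by
  have bijective : Function.Bijective (coactRegular σ) :=
    ⟨LinearMap.injective_iff_surjective.2 (coactRegular_surjective σ), coactRegular_surjective σ⟩
  let θ := LinearEquiv.ofBijective (coactRegular σ) bijective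
  let b := Module.finBasis K B
  let coords := TensorProduct.equivFinsuppOfBasisRight (M := H) b ≪≫ₗ
    Finsupp.linearEquivFunOnFinite K H _
  have coords_rTensor (z p) :
      coords ((Algebra.lmul K H h).rTensor B z) p = Algebra.lmul K H h (coords z p) := by
    induction z with
    | zero => simp only [map_zero, Pi.zero_apply]
    | add x y hx hy => simp only [map_add, Pi.add_apply, hx, hy]
    | tmul k v => simp [coords]
  rw [finrank_range_eq_sum_of_conj_piMap (θ.symm ≪≫ₗ coords) _ fun _ ↦ Algebra.lmul K H h]
  · simp [mul_comm]
  · intro z p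
    obtain ⟨w, rfl⟩ := θ.surjective z
    have hw : tensorRep (Algebra.lmul K H) σ h (θ w) = θ ((Algebra.lmul K H h).rTensor B w) :=
      tensorRep_lmul_coactRegular σ h w
    simp only [LinearEquiv.trans_apply, hw, θ.symm_apply_apply, coords_rTensor]

end RegularRepresentation

section SplitSemisimpleAlgebra

variable {K H ι : Type*} [Field K] [Ring H] [Algebra K H] {d : ι → ℕ}
  (e : H ≃ₐ[K] Π i, Matrix (Fin (d i)) (Fin (d i)) K)

/-- The simple representation of a product of matrix algebras on the column vectors of its `i`-th
factor. -/
noncomputable def blockRep (i : ι) : H →ₐ[K] Module.End K (Fin (d i) → K) :=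
  Matrix.toLinAlgEquiv'.toAlgHom.comp ((Pi.evalAlgHom K _ i).comp e.toAlgHom)

theorem blockRep_apply (i : ι) (h : H) (x : Fin (d i) → K) :
    blockRep e i h x = (e h i).mulVec x :=
  rfl

/-- The decomposition of a product of matrix algebras into the columns of its factors. -/
noncomputable def columns : H ≃ₗ[K] Π p : Σ i, Fin (d i), Fin (d p.1) → K :=
  e.toLinearEquiv ≪≫ₗ
    LinearEquiv.piCongrRight (fun i ↦ Matrix.transposeLinearEquiv (Fin (d i)) (Fin (d i)) K K) ≪≫ₗ
    (LinearEquiv.piCurry K fun i (_ : Fin (d i)) ↦ Fin (d i) → K).symm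

theorem columns_apply (h : H) (p : Σ i, Fin (d i)) (c : Fin (d p.1)) :
    columns e h p c = e h p.1 c p.2 :=
  rfl

theorem columns_mul (h k : H) (p : Σ i, Fin (d i)) :
    columns e (h * k) p = blockRep e p.1 h (columns e k p) := by
  ext c
  rw [columns_apply, map_mul]
  rfl

theorem sum_sigma_fin_fst [Fintype ι] (f : ι → ℕ) :
    ∑ p : Σ i, Fin (d i), f p.1 = ∑ i, d i * f i := by
  simp [Fintype.sum_sigma]

theorem finrank_range_lmul [Fintype ι] (h : H) :
    Module.finrank K (LinearMap.range (Algebra.lmul K H h)) =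
      ∑ i, d i * Module.finrank K (LinearMap.range (blockRep e i h)) :=
  (finrank_range_eq_sum_of_conj_piMap (columns e) _ (fun p ↦ blockRep e p.1 h) fun x p ↦
    columns_mul e h x p).trans
    (sum_sigma_fin_fst fun i ↦ Module.finrank K (LinearMap.range (blockRep e i h)))

theorem finrank_range_outerTensor_lmul [Fintype ι] {B : Type*} [AddCommGroup B] [Module K B]
    [FiniteDimensional K B] (σ : H →ₐ[K] Module.End K B) (X : H ⊗[K] H) :
    Module.finrank K (LinearMap.range (outerTensor (Algebra.lmul K H) σ X)) =
      ∑ i, d i * Module.finrank K (LinearMap.range (outerTensor (blockRep e i) σ X)) := by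
  classical
  let φ : H ⊗[K] B ≃ₗ[K] Π p : Σ i, Fin (d i), (Fin (d p.1) → K) ⊗[K] B :=
    (columns e).rTensor B ≪≫ₗ TensorProduct.piLeft ..
  have φ_tmul (h b p) : φ (h ⊗ₜ b) p = columns e h p ⊗ₜ b := by simp [φ]
  have φ_apply (z p) : φ (outerTensor (Algebra.lmul K H) σ X z) p =
      outerTensor (blockRep e p.1) σ X (φ z p) := by
    induction X with
    | zero => simp only [map_zero, LinearMap.zero_apply, Pi.zero_apply]
    | add X Y hX hY => simp only [map_add, LinearMap.add_apply, Pi.add_apply, hX, hY]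
    | tmul h k =>
      induction z with
      | zero => simp only [map_zero, Pi.zero_apply]
      | add x y hx hy => simp only [map_add, Pi.add_apply, hx, hy]
      | tmul x b =>
        rw [outerTensor_tmul, outerTensor_tmul, TensorProduct.map_tmul, φ_tmul, φ_tmul,
          TensorProduct.map_tmul, ← columns_mul]
        rfl
  exact (finrank_range_eq_sum_of_conj_piMap φ _ (fun p ↦ outerTensor (blockRep e p.1) σ X)
    φ_apply).trans
    (sum_sigma_fin_fst fun i ↦ Module.finrank K (LinearMap.range (outerTensor (blockRep e i) σ X)))

variable [DecidableEq ι]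

/-- The element of a product of matrix algebras given by the matrix unit `(a, b)` of the `i`-th
factor. -/
noncomputable def matrixUnit (i : ι) (a b : Fin (d i)) : H :=
  e.symm (Pi.single i (Matrix.single a b 1))

@[simp]
theorem apply_matrixUnit (i : ι) (a b : Fin (d i)) :
    e (matrixUnit e i a b) = Pi.single i (Matrix.single a b 1) :=
  e.apply_symm_apply _

theorem matrixUnit_mul_matrixUnit (i : ι) (a b c : Fin (d i)) :
    matrixUnit e i a b * matrixUnit e i b c = matrixUnit e i a c := by
  apply e.injective
  simp [← Pi.single_mul]

theorem mul_matrixUnit (h : H) (i : ι) (a b : Fin (d i)) :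
    h * matrixUnit e i a b = ∑ c, e h i c a • matrixUnit e i c b := by
  have column : e h i * Matrix.single a b 1 = ∑ c, e h i c a • Matrix.single c b (1 : K) := by
    ext c b'
    simp [Matrix.mul_apply, Matrix.sum_apply, Matrix.single_apply, ite_and]
  apply e.injective
  simp only [map_mul, map_sum, map_smul, apply_matrixUnit, ← Pi.single_mul_right, column,
    ← Pi.single_smul]
  exact map_sum (AddMonoidHom.single _ i) _ _

theorem completeOrthogonalIdempotents_matrixUnit [Fintype ι] :
    CompleteOrthogonalIdempotents fun p : Σ i, Fin (d i) ↦ matrixUnit e p.1 p.2 p.2 where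
  idem p := matrixUnit_mul_matrixUnit e p.1 p.2 p.2 p.2
  ortho := by
    rintro ⟨i, a⟩ ⟨j, b⟩ hne
    apply e.injective
    rcases eq_or_ne i j with rfl | hij
    · have hab : a ≠ b := fun hab ↦ hne (by rw [hab])
      simp [← Pi.single_mul, hab]
    · rw [map_mul, map_zero, apply_matrixUnit, apply_matrixUnit, ← Pi.single_mul_left,
        Pi.single_eq_of_ne hij, mul_zero, Pi.single_zero]
  complete := by
    apply e.injective
    rw [Fintype.sum_sigma, map_sum, map_one, ← (CompleteOrthogonalIdempotents.single _).complete]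
    refine Finset.sum_congr rfl fun i _ ↦ ?_
    simp only [map_sum, apply_matrixUnit, ← Matrix.sum_single_one]
    exact (map_sum (AddMonoidHom.single (fun i ↦ Matrix (Fin (d i)) (Fin (d i)) K) i) _ _).symm

theorem finrank_range_blockRep_matrixUnit (i k : ι) (a b : Fin (d k)) :
    Module.finrank K (LinearMap.range (blockRep e i (matrixUnit e k a b))) =
      if i = k then 1 else 0 := by
  rcases eq_or_ne i k with rfl | hik
  · have rank_one : blockRep e i (matrixUnit e i a b) =
        (LinearMap.proj b).smulRight (Pi.single a 1) := by
      ext x c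
      simp [blockRep_apply, Matrix.single_eq_single_vecMulVec_single,
        Matrix.vecMulVec_apply, Pi.single_comm, mul_comm]
    rw [rank_one, LinearMap.range_smulRight_apply, finrank_span_singleton, if_pos rfl]
    · simp
    · exact DFunLike.ne_iff.2 ⟨Pi.single b 1, by simp⟩
  · have vanish : blockRep e i (matrixUnit e k a b) = 0 := by
      ext x c
      simp [blockRep_apply, Pi.single_eq_of_ne hik]
    simp [vanish, hik]

section Multiplicity

variable {M : Type*} [AddCommGroup M] [Module K M] (ρ : H →ₐ[K] Module.End K M)

theorem finrank_range_matrixUnit_le [FiniteDimensional K M] (i : ι) (a b : Fin (d i)) :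
    Module.finrank K (LinearMap.range (ρ (matrixUnit e i a a))) ≤
      Module.finrank K (LinearMap.range (ρ (matrixUnit e i b b))) := by
  have factor : ρ (matrixUnit e i a a) =
      ρ (matrixUnit e i a b) ∘ₗ ρ (matrixUnit e i b b) ∘ₗ ρ (matrixUnit e i b a) := by
    simp only [← Module.End.mul_eq_comp, ← map_mul, matrixUnit_mul_matrixUnit]
  rw [factor, LinearMap.range_comp]
  exact (Submodule.finrank_map_le _ _).trans
    (Submodule.finrank_mono (LinearMap.range_comp_le_range _ _))

variable [∀ i, NeZero (d i)]

/-- The multiplicity of the `i`-th simple representation in `ρ`, encoded as the rank of a primitive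
idempotent of the `i`-th matrix factor. -/
noncomputable def blockMultiplicity (i : ι) : ℕ :=
  Module.finrank K (LinearMap.range (ρ (matrixUnit e i 0 0)))

theorem finrank_eq_sum_blockMultiplicity [Fintype ι] [FiniteDimensional K M] :
    Module.finrank K M = ∑ i, d i * blockMultiplicity e ρ i := by
  have rank_eq (i) (a : Fin (d i)) :
      Module.finrank K (LinearMap.range (ρ (matrixUnit e i a a))) = blockMultiplicity e ρ i :=
    (finrank_range_matrixUnit_le e ρ i a 0).antisymm <| finrank_range_matrixUnit_le e ρ i 0 a
  rw [finrank_eq_sum_of_completeOrthogonalIdempotents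
    ((completeOrthogonalIdempotents_matrixUnit e).map ρ.toRingHom), Fintype.sum_sigma]
  simp [rank_eq]

theorem exists_intertwining_of_blockMultiplicity_ne_zero {i : ι}
    (hi : blockMultiplicity e ρ i ≠ 0) :
    ∃ T : (Fin (d i) → K) →ₗ[K] M,
      (∀ h x, T (blockRep e i h x) = ρ h (T x)) ∧ T ≠ 0 := by
  have idempotent_ne_zero : ρ (matrixUnit e i 0 0) ≠ 0 := by
    rintro hzero
    exact hi (by rw [blockMultiplicity, hzero, LinearMap.range_zero, finrank_bot])
  obtain ⟨u, hu⟩ := DFunLike.ne_iff.1 idempotent_ne_zero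
  let T := Fintype.linearCombination K fun c ↦ ρ (matrixUnit e i c 0) u
  have T_single (a) : T (Pi.single a 1) = ρ (matrixUnit e i a 0) u := by simp [T]
  have intertwining (h) : T ∘ₗ blockRep e i h = ρ h ∘ₗ T := by
    ext a
    have expand : ρ h (ρ (matrixUnit e i a 0) u) =
        ∑ c, e h i c a • ρ (matrixUnit e i c 0) u := by
      rw [← Module.End.mul_apply, ← map_mul, mul_matrixUnit]
      simp
    simp [T_single, expand, blockRep_apply, T, Fintype.linearCombination_apply]
  exact ⟨T, fun h ↦ LinearMap.congr_fun (intertwining h),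
    DFunLike.ne_iff.2 ⟨Pi.single 0 1, by rwa [T_single]⟩⟩

end Multiplicity

end SplitSemisimpleAlgebra

theorem exists_finrank_eq_of_isSimpleModule {K H ι : Type*} [Field K] [Ring H] [Algebra K H]
    [Finite ι] {d : ι → ℕ} [∀ i, NeZero (d i)]
    (e : H ≃ₐ[K] Π i, Matrix (Fin (d i)) (Fin (d i)) K)
    {V : Type*} [AddCommGroup V] [Module K V] [Module H V] [IsScalarTower K H V]
    [IsSimpleModule H V] [FiniteDimensional K V] :
    ∃ k, Module.finrank K V = d k := by
  classical
  have := Fintype.ofFinite ι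
  have sum_eq := finrank_eq_sum_blockMultiplicity e (Algebra.lsmul K K V : H →ₐ[K] _)
  have : Nontrivial V := IsSimpleModule.nontrivial H V
  have sum_ne_zero := sum_eq ▸ (Module.finrank_pos (R := K) (M := V)).ne'
  obtain ⟨k, -, hk⟩ := Finset.exists_ne_zero_of_sum_ne_zero sum_ne_zero
  have mult_ne_zero := right_ne_zero_of_mul hk
  obtain ⟨T, hT, hT0⟩ := exists_intertwining_of_blockMultiplicity_ne_zero e _ mult_ne_zero
  have T_surjective := surjective_of_smul_mem_range (H := H) T
    (fun h x ↦ ⟨_, hT h x⟩) hT0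
  refine ⟨k, le_antisymm ?_ ?_⟩
  · simpa using LinearMap.finrank_le_finrank_of_surjective T_surjective
  · calc d k ≤ d k * blockMultiplicity e (Algebra.lsmul K K V) k :=
          Nat.le_mul_of_pos_right _ (Nat.pos_of_ne_zero mult_ne_zero)
      _ ≤ Module.finrank K V := sum_eq ▸ Finset.single_le_sum_of_canonicallyOrdered
          (f := fun i ↦ d i * blockMultiplicity e (Algebra.lsmul K K V) i) (Finset.mem_univ k)

section SplitSemisimpleHopfAlgebra

variable {K H ι : Type*} [Field K] [Ring H] [HopfAlgebra K H] [DecidableEq ι]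
  {d : ι → ℕ} [∀ i, NeZero (d i)] (e : H ≃ₐ[K] Π i, Matrix (Fin (d i)) (Fin (d i)) K)

theorem sum_mul_blockMultiplicity_tensorRep_blockRep [Fintype ι] [FiniteDimensional K H]
    {B : Type*} [AddCommGroup B] [Module K B] [FiniteDimensional K B]
    (σ : H →ₐ[K] Module.End K B) (k : ι) :
    ∑ i, d i * blockMultiplicity e (tensorRep (blockRep e i) σ) k =
      d k * Module.finrank K B := by
  have regular := finrank_range_tensorRep_lmul σ (matrixUnit e k 0 0)
  rw [tensorRep_apply, finrank_range_outerTensor_lmul e, finrank_range_lmul e] at regular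
  simp only [finrank_range_blockRep_matrixUnit, mul_ite, mul_one, mul_zero, Finset.sum_ite_eq',
    Finset.mem_univ, if_true] at regular
  exact regular

theorem finrank_le_of_blockMultiplicity_tensorRep_ne_zero {V : Type*} [AddCommGroup V] [Module K V]
    [Module H V] [IsScalarTower K H V] [IsSimpleModule H V] {i j : ι}
    (hij : blockMultiplicity e (tensorRep (blockRep e i) (Algebra.lsmul K K V)) j ≠ 0) :
    Module.finrank K V ≤ d i * d j := by
  obtain ⟨T, hT, hT0⟩ := exists_intertwining_of_blockMultiplicity_ne_zero e _ hij
  simpa using finrank_le_of_intertwining_tensorRep (blockRep e j) (blockRep e i) T hT hT0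

end SplitSemisimpleHopfAlgebra

section FusionArithmetic

variable {ι : Type*} [Fintype ι] {d : ι → ℕ} {k : ι}

theorem apply_eq_of_sum_mul_eq {t : ι → ℕ} {a : ℕ} (hk : 0 < d k)
    (hsum : ∑ j, d j * t j = a * d k) (ht : ∀ j ≠ k, t j = 0) : t k = a := by
  rw [Fintype.sum_eq_single k fun j hj ↦ by rw [ht j hj, mul_zero], mul_comm] at hsum
  exact Nat.eq_of_mul_eq_mul_right hk hsum

theorem dvd_apply_of_sum_mul_eq {t : ι → ℕ} {a c : ℕ} (hc : c.Coprime (d k))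
    (hsum : ∑ j, d j * t j = a * d k) (ha : c ∣ a) (ht : ∀ j ≠ k, t j ≠ 0 → c ∣ d j) :
    c ∣ t k := by
  classical
  have dvd_rest : c ∣ ∑ j ∈ Finset.univ.erase k, d j * t j := by
    refine Finset.dvd_sum fun j hj ↦ ?_
    rcases eq_or_ne (t j) 0 with htj | htj
    · rw [htj, mul_zero]
      exact dvd_zero c
    · exact (ht j (Finset.ne_of_mem_erase hj) htj).mul_right _
  rw [← Finset.add_sum_erase _ _ (Finset.mem_univ k)] at hsum
  exact hc.dvd_of_dvd_mul_left <| (Nat.dvd_add_left dvd_rest).1 (hsum ▸ ha.mul_right _)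

theorem le_three_of_sum_sq_eq_sixty (hsq : ∑ i, d i * d i = 60) (hk : d k = 7) {i : ι}
    (hik : i ≠ k) : d i ≤ 3 := by
  classical
  rw [← Finset.add_sum_erase _ _ (Finset.mem_univ k), hk] at hsq
  have := Finset.single_le_sum_of_canonicallyOrdered (f := fun i ↦ d i * d i)
    (Finset.mem_erase_of_ne_of_mem hik (Finset.mem_univ i))
  nlinarith

theorem mul_modEq_mul_self_of_le_three {t : ι → ℕ} {i : ι} (hk : d k = 7)
    (hle : ∀ j ≠ k, d j ≤ 3) (hik : i ≠ k) (hsum : ∑ j, d j * t j = d i * d k)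
    (hbound : ∀ j, t j ≠ 0 → d k ≤ d i * d j) : d i * t k ≡ d i * d i [MOD 9] := by
  have both_eq_three {j} (hj : j ≠ k) (htj : t j ≠ 0) : d i = 3 ∧ d j = 3 := by
    have := hbound j htj
    have := hle i hik
    have := hle j hj
    constructor <;> nlinarith
  by_cases hi : d i = 3
  · obtain ⟨m, hm⟩ : 3 ∣ t k := dvd_apply_of_sum_mul_eq (by rw [hk]; norm_num) hsum
      (by rw [hi]) fun j hj htj ↦ (both_eq_three hj htj).2 ▸ dvd_rfl
    rw [hi, hm, Nat.ModEq]
    lia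
  · rw [apply_eq_of_sum_mul_eq (by lia) hsum fun j hj ↦
      by_contra fun htj ↦ hi (both_eq_three hj htj).1]

theorem ne_seven_of_sum_sq_eq_sixty {t : ι → ι → ℕ} (hsq : ∑ i, d i * d i = 60)
    (hrow : ∀ i, ∑ j, d j * t i j = d i * d k) (hcol : ∑ i, d i * t i k = d k * d k)
    (hbound : ∀ i j, t i j ≠ 0 → d k ≤ d i * d j) : d k ≠ 7 := by
  classical
  intro hk
  have rest_modEq : ∑ i ∈ Finset.univ.erase k, d i * t i k ≡
      ∑ i ∈ Finset.univ.erase k, d i * d i [MOD 9] :=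
    Nat.ModEq.sum fun i hi ↦ mul_modEq_mul_self_of_le_three hk
      (fun _ ↦ le_three_of_sum_sq_eq_sixty hsq hk) (Finset.ne_of_mem_erase hi) (hrow i) (hbound i)
  have rest_le : ∑ i ∈ Finset.univ.erase k, d i * t i k ≤
      ∑ i ∈ Finset.univ.erase k, d i * d i :=
    Finset.sum_le_sum fun i _ ↦ Nat.mul_le_mul_left _ <| by
      have := Finset.single_le_sum_of_canonicallyOrdered (f := fun j ↦ d j * t i j)
        (Finset.mem_univ k)
      rw [hrow] at this
      nlinarith
  rw [← Finset.add_sum_erase _ _ (Finset.mem_univ k), hk] at hsq hcol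
  have rest_sq : ∑ i ∈ Finset.univ.erase k, d i * d i = 11 := by lia
  rw [rest_sq, Nat.ModEq] at rest_modEq
  lia

end FusionArithmetic

theorem finrank_eq_sum_mul_self {K H ι : Type*} [Field K] [Ring H] [Algebra K H] [Fintype ι]
    {d : ι → ℕ} (e : H ≃ₐ[K] Π i, Matrix (Fin (d i)) (Fin (d i)) K) :
    Module.finrank K H = ∑ i, d i * d i := by
  rw [e.toLinearEquiv.finrank_eq, Module.finrank_pi_fintype]
  simp [Module.finrank_matrix]

theorem finrank_ne_seven_of_finrank_eq_sixty {K H ι : Type*} [Field K] [Ring H] [HopfAlgebra K H]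
    [FiniteDimensional K H] [Finite ι] {d : ι → ℕ} [∀ i, NeZero (d i)]
    (e : H ≃ₐ[K] Π i, Matrix (Fin (d i)) (Fin (d i)) K) (hdim : Module.finrank K H = 60)
    {V : Type*} [AddCommGroup V] [Module K V] [Module H V] [IsScalarTower K H V]
    [IsSimpleModule H V] [FiniteDimensional K V] : Module.finrank K V ≠ 7 := by
  classical
  have := Fintype.ofFinite ι
  obtain ⟨k, hk⟩ := exists_finrank_eq_of_isSimpleModule e (V := V)
  rw [hk]
  refine ne_seven_of_sum_sq_eq_sixty
    (t := fun i j ↦ blockMultiplicity e (tensorRep (blockRep e i) (Algebra.lsmul K K V)) j)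
    (finrank_eq_sum_mul_self e ▸ hdim) (fun i ↦ ?_) ?_ fun i j hij ↦ ?_
  · rw [← finrank_eq_sum_blockMultiplicity, Module.finrank_tensorProduct, Module.finrank_fin_fun,
      hk]
  · rw [sum_mul_blockMultiplicity_tensorRep_blockRep, hk]
  · exact hk ▸ finrank_le_of_blockMultiplicity_tensorRep_ne_zero e hij

theorem kaplansky_sixth_for_dim_sixty_general
    (K : Type*) [Field K] [IsAlgClosed K]
    (H : Type*) [Ring H] [HopfAlgebra K H] [IsSemisimpleRing H]
    (hdim : Module.finrank K H = 60)
    (V : Type*) [AddCommGroup V] [Module K V] [Module H V] [IsScalarTower K H V]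
    [IsSimpleModule H V] :
    Module.finrank K V ∣ 60 := by
  have : FiniteDimensional K H := Module.finite_of_finrank_pos (by rw [hdim]; norm_num)
  have : FiniteDimensional K V := Module.Finite.trans H V
  have : Nontrivial V := IsSimpleModule.nontrivial H V
  obtain ⟨n, d, _, ⟨e⟩⟩ := IsSemisimpleRing.exists_algEquiv_pi_matrix_of_isAlgClosed K H
  obtain ⟨k, hk⟩ := exists_finrank_eq_of_isSimpleModule e (V := V)
  have pos : 0 < Module.finrank K V := Module.finrank_pos
  have ne_seven := finrank_ne_seven_of_finrank_eq_sixty e hdim (V := V)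
  have le_seven : Module.finrank K V ≤ 7 := by
    have sq_le := Finset.single_le_sum_of_canonicallyOrdered (f := fun i ↦ d i * d i)
      (Finset.mem_univ k)
    rw [← finrank_eq_sum_mul_self e, hdim, ← hk] at sq_le
    nlinarith
  interval_cases Module.finrank K V <;> first | contradiction | decide

/-- For a semisimple Hopf algebra over ℂ of dimension 60, the dimension of any
simple module divides 60. -/
theorem kaplansky_sixth_for_dim_sixty
    (H : Type*) [Ring H] [HopfAlgebra ℂ H]
    [FiniteDimensional ℂ H] [IsSemisimpleRing H]
    (hdim : Module.finrank ℂ H = 60)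
    (V : Type*) [AddCommGroup V] [Module ℂ V] [Module H V] [IsScalarTower ℂ H V]
    [IsSimpleModule H V] :
    Module.finrank ℂ V ∣ 60 :=
  kaplansky_sixth_for_dim_sixty_general ℂ H hdim V
end

section
/- Let H be a semisimple Hopf algebra over ℂ whose dimension n satisfies 1 < n < 60. Then H contains a nontrivial group-like element (an element g ≠ 1 with Δ(g) = g ⊗ g and ε(g) = 1), and H admits a nontrivial one-dimensional representation (a ℂ-algebra homomorphism φ : H → ℂ with φ ≠ ε). -/
/-!
The irreducible characters of `H` form a fusion ring. If the trivial character were the only one of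
dimension one, then decomposing products of small objects would force dimensions whose squares add
up to at least `60`; this gives the one-dimensional representation.

For the group-like element one applies this to the dual, whose semisimplicity is the theorem of
Larson and Radford. The form `h ↦ Tr (x ↦ S² x * h)` is a right integral of the dual, so by Maschke
it suffices that `Tr S² ≠ 0`. Radford's formula expresses `S⁴` as conjugation by a group-like
element, so `S²` has finite order; since it also fixes every irreducible character, it acts on each
matrix block as conjugation by some `u` of finite order, with trace `|tr u|² ≥ 0`, and the trivial
block contributes `1`.
-/

namespace SemisimpleHopf

/-! ### Fusion rules of small dimension -/

/-- The numerical data of a fusion ring: dimensions `dim`, multiplicities `mult i j k` of the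
simple object `k` in the product `i * j`, the unit object and duality. -/
structure FusionRule (ι : Type*) [Fintype ι] [DecidableEq ι] where
  dim : ι → ℕ
  mult : ι → ι → ι → ℕ
  unit : ι
  dual : ι → ι
  dim_unit : dim unit = 1
  dim_pos : ∀ i, 0 < dim i
  dual_dual : ∀ i, dual (dual i) = i
  dim_dual : ∀ i, dim (dual i) = dim i
  dim_mul_dim : ∀ i j, dim i * dim j = ∑ k, mult i j k * dim k
  frobenius : ∀ i j k, mult i j k = mult k (dual j) i
  unit_mult : ∀ j k, mult unit j k = if j = k then 1 else 0

namespace FusionRule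

open Finset

variable {ι : Type*} [Fintype ι] [DecidableEq ι] (F : FusionRule ι)

/-- The number, with multiplicity, of constituents of dimension `c` in the product `i * j`. -/
def count (i j : ι) (c : ℕ) : ℕ := ∑ k with F.dim k = c, F.mult i j k

/-- The number of simple objects of dimension `c`. -/
def card (c : ℕ) : ℕ := #{k | F.dim k = c}

variable {F} {i j k : ι} {c : ℕ}

theorem mult_dual : F.mult k (F.dual j) i = F.mult i j k := (F.frobenius i j k).symm

theorem mult_self_dual_unit : F.mult i (F.dual i) F.unit = 1 := by
  rw [F.frobenius, F.dual_dual, F.unit_mult, if_pos rfl]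

theorem mult_dual_unit_of_ne (hne : i ≠ j) : F.mult i (F.dual j) F.unit = 0 := by
  rw [F.frobenius, F.dual_dual, F.unit_mult, if_neg hne.symm]

theorem mult_unit_of_dim_ne (hne : F.dim i ≠ F.dim j) : F.mult i j F.unit = 0 := by
  rw [F.frobenius, F.unit_mult, if_neg]
  rintro rfl
  exact hne (F.dim_dual j)

theorem mult_le_count (hk : F.dim k = c) : F.mult i j k ≤ F.count i j c :=
  single_le_sum (f := F.mult i j) (fun _ _ => Nat.zero_le _) (by simpa using hk)

theorem mult_add_mult_le_count {l : ι} (hne : k ≠ l) (hk : F.dim k = c) (hl : F.dim l = c) :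
    F.mult i j k + F.mult i j l ≤ F.count i j c :=
  add_le_sum (fun _ _ => Nat.zero_le _) (by simpa using hk) (by simpa using hl) hne

variable (F) in
theorem mult_mul_dim_le (i j k : ι) : F.mult i j k * F.dim k ≤ F.dim i * F.dim j := by
  rw [F.dim_mul_dim]
  exact single_le_sum (f := fun k => F.mult i j k * F.dim k)
    (fun _ _ => Nat.zero_le _) (mem_univ k)

theorem exists_mult_pos (hpos : 0 < F.count i j c) : ∃ k, F.dim k = c ∧ 0 < F.mult i j k := by
  obtain ⟨k, hk, hne⟩ := exists_ne_zero_of_sum_ne_zero hpos.ne'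
  exact ⟨k, (mem_filter.1 hk).2, Nat.pos_of_ne_zero hne⟩

theorem count_eq_zero (hzero : ∀ k, F.dim k = c → F.mult i j k = 0) : F.count i j c = 0 :=
  sum_eq_zero fun k hk => hzero k (mem_filter.1 hk).2

theorem count_eq_mult (hk : F.dim k = c) (hzero : ∀ l, F.dim l = c → l ≠ k → F.mult i j l = 0) :
    F.count i j c = F.mult i j k :=
  sum_eq_single_of_mem k (by simpa using hk) fun l hl => hzero l (mem_filter.1 hl).2

theorem one_le_card (hk : F.dim k = c) : 1 ≤ F.card c :=
  card_pos.2 ⟨k, by simpa using hk⟩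

theorem two_le_card (hne : i ≠ j) (hi : F.dim i = c) (hj : F.dim j = c) : 2 ≤ F.card c :=
  one_lt_card.2 ⟨i, by simpa using hi, j, by simpa using hj, hne⟩

theorem one_le_card_of_count_pos (hpos : 0 < F.count i j c) : 1 ≤ F.card c :=
  let ⟨_, hk, _⟩ := exists_mult_pos hpos
  one_le_card hk

theorem count_eq_zero_of_card_eq_zero (hcard : F.card c = 0) : F.count i j c = 0 := by
  by_contra hne
  have := one_le_card_of_count_pos (Nat.pos_of_ne_zero hne)
  omega

theorem dim_lt (hsmall : ∑ k, F.dim k ^ 2 < 60) (i : ι) : F.dim i < 8 := by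
  have hi : F.dim i ^ 2 ≤ ∑ k, F.dim k ^ 2 :=
    single_le_sum (f := fun k => F.dim k ^ 2) (fun _ _ => Nat.zero_le _) (mem_univ i)
  nlinarith

theorem sum_dim_fiberwise (hsmall : ∑ k, F.dim k ^ 2 < 60) (f : ι → ℕ) :
    ∑ k, f k = ∑ c ∈ range 8, ∑ k with F.dim k = c, f k :=
  (sum_fiberwise_of_maps_to (fun k _ => mem_range.2 (dim_lt hsmall k)) f).symm

theorem sum_sq_mul_card_lt (hsmall : ∑ k, F.dim k ^ 2 < 60) :
    F.card 1 + 4 * F.card 2 + 9 * F.card 3 + 16 * F.card 4 + 25 * F.card 5 + 36 * F.card 6 +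
      49 * F.card 7 < 60 := by
  have hfiber : ∀ c, ∑ k with F.dim k = c, F.dim k ^ 2 = c ^ 2 * F.card c := fun c => by
    rw [card, mul_comm, ← smul_eq_mul]
    exact sum_eq_card_nsmul fun k hk => by rw [(mem_filter.1 hk).2]
  have hsum := hsmall
  rw [sum_dim_fiberwise hsmall] at hsum
  simp only [hfiber, sum_range_succ, sum_range_zero] at hsum
  omega

variable (F) in
/-- A hypothetical counterexample to the existence of a nontrivial simple object of dimension one
in total dimension below `60`. -/
structure IsSmallPerfect : Prop where
  sum_dim_sq_lt : ∑ k, F.dim k ^ 2 < 60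
  eq_unit : ∀ i, F.dim i = 1 → i = F.unit

namespace IsSmallPerfect

variable (h : F.IsSmallPerfect)
include h

theorem sum_lt : 1 + 4 * F.card 2 + 9 * F.card 3 + 16 * F.card 4 + 25 * F.card 5 +
    36 * F.card 6 + 49 * F.card 7 < 60 := by
  have hsum := sum_sq_mul_card_lt h.sum_dim_sq_lt
  have hunit := one_le_card F.dim_unit
  omega

theorem mul_eq {a b : ℕ} (hi : F.dim i = a) (hj : F.dim j = b) :
    a * b = F.mult i j F.unit + 2 * F.count i j 2 + 3 * F.count i j 3 + 4 * F.count i j 4 +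
      5 * F.count i j 5 + 6 * F.count i j 6 + 7 * F.count i j 7 := by
  have hfiber : ∀ c, ∑ k with F.dim k = c, F.mult i j k * F.dim k = c * F.count i j c :=
    fun c => by
      rw [count, mul_sum]
      exact sum_congr rfl fun k hk => by rw [(mem_filter.1 hk).2, mul_comm]
  have hone : F.count i j 1 = F.mult i j F.unit :=
    count_eq_mult F.dim_unit fun k hk hne => absurd (h.eq_unit k hk) hne
  rw [← hi, ← hj, F.dim_mul_dim, sum_dim_fiberwise h.sum_dim_sq_lt, ← hone]
  simp only [hfiber, sum_range_succ, sum_range_zero]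
  omega

theorem mul_dual_self_eq {a : ℕ} (hi : F.dim i = a) :
    a * a = 1 + 2 * F.count i (F.dual i) 2 + 3 * F.count i (F.dual i) 3 +
      4 * F.count i (F.dual i) 4 + 5 * F.count i (F.dual i) 5 + 6 * F.count i (F.dual i) 6 +
      7 * F.count i (F.dual i) 7 := by
  rw [h.mul_eq hi ((F.dim_dual i).trans hi), mult_self_dual_unit]

theorem mul_dual_eq {a b : ℕ} (hne : i ≠ j) (hi : F.dim i = a) (hj : F.dim j = b) :
    a * b = 2 * F.count i (F.dual j) 2 + 3 * F.count i (F.dual j) 3 +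
      4 * F.count i (F.dual j) 4 + 5 * F.count i (F.dual j) 5 + 6 * F.count i (F.dual j) 6 +
      7 * F.count i (F.dual j) 7 := by
  rw [h.mul_eq hi ((F.dim_dual j).trans hj), mult_dual_unit_of_ne hne, zero_add]

theorem mul_eq_of_dim_ne {a b : ℕ} (hi : F.dim i = a) (hj : F.dim j = b) (hne : a ≠ b) :
    a * b = 2 * F.count i j 2 + 3 * F.count i j 3 + 4 * F.count i j 4 + 5 * F.count i j 5 +
      6 * F.count i j 6 + 7 * F.count i j 7 := by
  rw [h.mul_eq hi hj, mult_unit_of_dim_ne (hi ▸ hj ▸ hne), zero_add]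

section DimTwo

variable {V : ι}

theorem mult_eq_zero_of_dim_two_of_dim_three {K W : ι} (hne : K ≠ V) (hK : F.dim K = 2)
    (hV : F.dim V = 2) (hW : F.dim W = 3) : F.mult W V K = 0 := by
  have hmul := h.mul_dual_eq hne hK hV
  have hle := mult_le_count (i := K) (j := F.dual V) hW
  rw [mult_dual] at hle
  omega

theorem exists_dim_three (hV : F.dim V = 2) :
    ∃ W, F.dim W = 3 ∧ F.count V (F.dual V) 3 = 1 ∧ F.mult V (F.dual V) W = 1 := by
  have hmul := h.mul_dual_self_eq hV
  have hcount : F.count V (F.dual V) 3 = 1 := by lia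
  obtain ⟨W, hW, hpos⟩ := exists_mult_pos (hcount ▸ Nat.one_pos)
  have hle := mult_le_count (i := V) (j := F.dual V) hW
  exact ⟨W, hW, hcount, by omega⟩

theorem exists_dim_four {W : ι} (hV : F.dim V = 2) (hW : F.dim W = 3)
    (hmult : F.mult V (F.dual V) W = 1) : ∃ U, F.dim U = 4 ∧ F.mult W V U = 1 := by
  have hmul := h.mul_eq_of_dim_ne hW hV (by decide)
  have htwo : F.count W V 2 = 1 := by
    rw [count_eq_mult hV fun K hK hne => h.mult_eq_zero_of_dim_two_of_dim_three hne hK hV hW,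
      ← mult_dual, hmult]
  have hfour : F.count W V 4 = 1 := by omega
  obtain ⟨U, hU, hpos⟩ := exists_mult_pos (hfour ▸ Nat.one_pos)
  have hle := mult_le_count (i := W) (j := V) hU
  exact ⟨U, hU, by omega⟩

theorem mult_eq_zero_of_dim_three {T U W : ι} (hV : F.dim V = 2) (hW : F.dim W = 3)
    (hcount : F.count V (F.dual V) 3 = 1) (hmult : F.mult V (F.dual V) W = 1)
    (hU : F.dim U = 4) (hT : F.dim T = 3) (hne : T ≠ W) : F.mult U (F.dual V) T = 0 := by
  by_contra hTU
  have hmul := h.mul_eq_of_dim_ne hT hV (by decide)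
  have hle := mult_le_count (i := T) (j := V) hU
  rw [← mult_dual] at hle
  obtain ⟨Q, hQ, hQT⟩ : ∃ Q, F.dim Q = 2 ∧ 0 < F.mult T V Q := exists_mult_pos (by omega)
  obtain rfl : Q = V := by
    by_contra hQV
    exact hQT.ne' (h.mult_eq_zero_of_dim_two_of_dim_three hQV hQ hV hT)
  have hsum := mult_add_mult_le_count (i := Q) (j := F.dual Q) hne hT hW
  rw [mult_dual] at hsum
  omega

theorem exists_dim_five {U W : ι} (hV : F.dim V = 2) (hW : F.dim W = 3)
    (hcount : F.count V (F.dual V) 3 = 1) (hmult : F.mult V (F.dual V) W = 1)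
    (hU : F.dim U = 4) (hUW : F.mult W V U = 1) :
    ∃ Y, F.dim Y = 5 ∧ 0 < F.mult U (F.dual V) Y := by
  have hmul := h.mul_eq_of_dim_ne hU ((F.dim_dual V).trans hV) (by decide)
  have hthree : F.count U (F.dual V) 3 = 1 := by
    rw [count_eq_mult hW fun T hT hne =>
      h.mult_eq_zero_of_dim_three hV hW hcount hmult hU hT hne, mult_dual, hUW]
  exact exists_mult_pos (by omega)

theorem exists_dim_six {U Y : ι} (hV : F.dim V = 2) (hU : F.dim U = 4) (hY : F.dim Y = 5)
    (hYU : 0 < F.mult U (F.dual V) Y) : 1 ≤ F.card 6 := by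
  have hmul := h.mul_eq_of_dim_ne hY hV (by decide)
  have hfour := mult_le_count (i := Y) (j := V) hU
  rw [← mult_dual] at hfour
  have htwo : F.count Y V 2 = 0 := count_eq_zero fun K hK => by
    have hle := F.mult_mul_dim_le K (F.dual V) Y
    rw [mult_dual, F.dim_dual, hK, hV, hY] at hle
    omega
  have hthree : F.count Y V 3 = 0 := count_eq_zero fun K hK => by
    have hmulK := h.mul_eq_of_dim_ne hK ((F.dim_dual V).trans hV) (by decide)
    have hle := mult_le_count (i := K) (j := F.dual V) hY
    rw [mult_dual] at hle
    omega
  exact one_le_card_of_count_pos (F := F) (i := Y) (j := V) (by lia)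

/- As for tensor powers of the two-dimensional representation of the binary icosahedral group, `V`
forces simple objects of dimension `3`, `4`, `5` and `6`, and `4 + 9 + 16 + 25 + 36 ≥ 60`. -/
theorem dim_ne_two (V : ι) : F.dim V ≠ 2 := by
  intro hV
  obtain ⟨W, hW, hcount, hWV⟩ := h.exists_dim_three hV
  obtain ⟨U, hU, hUW⟩ := h.exists_dim_four hV hW hWV
  obtain ⟨Y, hY, hYU⟩ := h.exists_dim_five hV hW hcount hWV hU hUW
  have hsix := h.exists_dim_six hV hU hY hYU
  have hsum := h.sum_lt
  have hfive := one_le_card hY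
  omega

end DimTwo

section DimThree

theorem count_two : F.count i j 2 = 0 :=
  count_eq_zero fun k hk => absurd hk (h.dim_ne_two k)

variable {X A : ι}

theorem mult_eq_zero_of_dim_three_of_ne {K : ι} (hX : F.dim X = 3) (hA : F.dim A = 4 ∨ F.dim A = 5)
    (hK : F.dim K = 3) (hne : K ≠ X) : F.mult A X K = 0 := by
  by_contra hAK
  have hmul := h.mul_dual_eq hne hK hX
  rw [h.count_two] at hmul
  have hle := mult_le_count (F := F) (i := K) (j := F.dual X) (k := A) rfl
  rw [mult_dual] at hle
  have hfour : 0 < F.count K (F.dual X) 4 := by rcases hA with hA | hA <;> rw [hA] at hle <;> lia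
  have hfive : 0 < F.count K (F.dual X) 5 := by lia
  have hsum := h.sum_lt
  have hthree := two_le_card hne hK hX
  have := one_le_card_of_count_pos hfour
  have := one_le_card_of_count_pos hfive
  omega

theorem count_three_eq (hX : F.dim X = 3) (hA : F.dim A = 4 ∨ F.dim A = 5) :
    F.count A X 3 = F.mult X (F.dual X) A := by
  rw [mult_dual]
  exact count_eq_mult hX fun K hK hne => h.mult_eq_zero_of_dim_three_of_ne hX hA hK hne

theorem count_dual_self_four_ne_two (hX : F.dim X = 3) : F.count X (F.dual X) 4 ≠ 2 := by
  intro hcount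
  obtain ⟨A, hA, hpos⟩ : ∃ A, F.dim A = 4 ∧ 0 < F.mult X (F.dual X) A := exists_mult_pos (by omega)
  have hle := mult_le_count (i := X) (j := F.dual X) hA
  have hmul := h.mul_eq_of_dim_ne hA hX (by decide)
  rw [h.count_two, h.count_three_eq hX (.inl hA)] at hmul
  have hsum := h.sum_lt
  have hthree := one_le_card hX
  have hfour := one_le_card hA
  obtain hone | htwo : F.mult X (F.dual X) A = 1 ∨ F.mult X (F.dual X) A = 2 := by omega
  · obtain ⟨B, hB, hne⟩ : ∃ B, F.dim B = 4 ∧ B ≠ A := by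
      by_contra! hunique
      rw [count_eq_mult hA fun B hB hne => absurd (hunique B hB) hne] at hcount
      omega
    have := two_le_card hne hB hA
    have := one_le_card_of_count_pos (F := F) (i := A) (j := X) (c := 5) (by lia)
    omega
  · have := one_le_card_of_count_pos (F := F) (i := A) (j := X) (c := 6) (by lia)
    omega

theorem count_dual_self_five_ne_one (hX : F.dim X = 3) : F.count X (F.dual X) 5 ≠ 1 := by
  intro hcount
  obtain ⟨A, hA, hpos⟩ : ∃ A, F.dim A = 5 ∧ 0 < F.mult X (F.dual X) A := exists_mult_pos (by omega)
  have hle := mult_le_count (i := X) (j := F.dual X) hA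
  have hsum := h.sum_lt
  have hthree := one_le_card hX
  have hfive := one_le_card hA
  have hmul := h.mul_eq_of_dim_ne hA hX (by decide)
  have hsix : F.count A X 6 = 0 := count_eq_zero_of_card_eq_zero (by omega)
  have hseven : F.count A X 7 = 0 := count_eq_zero_of_card_eq_zero (by omega)
  rw [h.count_two, h.count_three_eq hX (.inr hA), hsix, hseven] at hmul
  have hfour : F.count A X 4 = 3 := by lia
  obtain ⟨K, hK, -⟩ := exists_mult_pos (hfour ▸ three_pos)
  have hKX : F.count A X 4 = F.mult K (F.dual X) A := by
    rw [mult_dual]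
    refine count_eq_mult hK fun L hL hne => ?_
    have := two_le_card hne hL hK
    omega
  have hdim := F.mult_mul_dim_le K (F.dual X) A
  rw [F.dim_dual, hK, hX, hA] at hdim
  omega

theorem dim_ne_three (X : ι) : F.dim X ≠ 3 := by
  intro hX
  have hmul := h.mul_dual_self_eq hX
  rw [h.count_two] at hmul
  have hfour := h.count_dual_self_four_ne_two hX
  have hfive := h.count_dual_self_five_ne_one hX
  lia

end DimThree

section DimFour

theorem count_three : F.count i j 3 = 0 :=
  count_eq_zero fun k hk => absurd hk (h.dim_ne_three k)

theorem dim_ne_four (X : ι) : F.dim X ≠ 4 := by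
  intro hX
  have hsum := h.sum_lt
  have hcard := one_le_card hX
  have hseven : ∀ i j, F.count i j 7 = 0 := fun i j =>
    count_eq_zero_of_card_eq_zero (by omega)
  have hmul := h.mul_dual_self_eq hX
  rw [h.count_two, h.count_three, hseven] at hmul
  obtain ⟨A, hA, -⟩ : ∃ A, F.dim A = 5 ∧ 0 < F.mult X (F.dual X) A := exists_mult_pos (by lia)
  have hfive := one_le_card hA
  have hsix : ∀ i j, F.count i j 6 = 0 := fun i j =>
    count_eq_zero_of_card_eq_zero (by omega)
  have hXA : F.count X (F.dual X) 5 = F.mult A X X := by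
    rw [← mult_dual]
    refine count_eq_mult hA fun B hB hne => ?_
    have := two_le_card hne hB hA
    omega
  have hAX : F.count A X 4 = F.mult A X X := count_eq_mult hX fun K hK hne => by
    have hmulK := h.mul_dual_eq hne hK hX
    rw [h.count_two, h.count_three, hseven, hsix] at hmulK
    have hle := mult_le_count (i := K) (j := F.dual X) hA
    rw [mult_dual] at hle
    lia
  have hmulA := h.mul_eq_of_dim_ne hA hX (by decide)
  rw [h.count_two, h.count_three, hseven, hsix] at hmulA
  rw [hsix] at hmul
  lia

end DimFour

theorem count_four : F.count i j 4 = 0 :=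
  count_eq_zero fun k hk => absurd hk (h.dim_ne_four k)

theorem dim_lt_five (X : ι) : F.dim X < 5 := by
  by_contra! hfive
  have hlt := dim_lt h.sum_dim_sq_lt X
  have hsum := h.sum_lt
  have hcard : 1 ≤ F.card (F.dim X) := one_le_card rfl
  have hmul := h.mul_dual_self_eq (i := X) rfl
  rw [h.count_two, h.count_three, h.count_four] at hmul
  have hcount : ∀ c, F.card c = 0 → F.count X (F.dual X) c = 0 :=
    fun c => count_eq_zero_of_card_eq_zero
  have hcountFive := hcount 5
  have hcountSix := hcount 6
  have hcountSeven := hcount 7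
  interval_cases F.dim X <;> lia

theorem forall_eq_unit (X : ι) : X = F.unit := by
  apply h.eq_unit
  have := h.dim_lt_five X
  have := h.dim_ne_two X
  have := h.dim_ne_three X
  have := h.dim_ne_four X
  have := F.dim_pos X
  omega

end IsSmallPerfect

theorem exists_ne_unit_dim_eq_one (hlarge : 1 < ∑ i, F.dim i ^ 2) (hsmall : ∑ i, F.dim i ^ 2 < 60) :
    ∃ i, i ≠ F.unit ∧ F.dim i = 1 := by
  by_contra! hperfect
  have h : F.IsSmallPerfect := ⟨hsmall, fun i hi => by_contra fun hne => hperfect i hne hi⟩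
  rw [sum_eq_single_of_mem F.unit (mem_univ _)
    fun i _ hne => absurd (h.forall_eq_unit i) hne, F.dim_unit] at hlarge
  omega

end FusionRule

/-! ### Integrals and the Casimir element -/

section Casimir

open TensorProduct Coalgebra HopfAlgebra WithConv

variable {k H : Type*} [CommRing k] [Ring H] [HopfAlgebra k H]

section

variable {A : Type*} [Ring A] [Algebra k A]

theorem algHom_convMul_comp_antipode (f : H →ₐ[k] A) :
    toConv f.toLinearMap * toConv (f.toLinearMap ∘ₗ antipode k (A := H)) = 1 := by
  have h := LinearMap.algHom_comp_convMul_distrib f (toConv .id) (toConv (antipode k (A := H)))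
  rw [LinearMap.id_mul_antipode] at h
  apply WithConv.ext
  rw [ofConv_toConv, LinearMap.comp_id, ofConv_toConv] at h
  rw [← h]
  ext x
  simp

theorem comp_antipode_convMul_algHom (f : H →ₐ[k] A) :
    toConv (f.toLinearMap ∘ₗ antipode k (A := H)) * toConv f.toLinearMap = 1 := by
  have h := LinearMap.algHom_comp_convMul_distrib f (toConv (antipode k (A := H))) (toConv .id)
  rw [LinearMap.antipode_mul_id] at h
  apply WithConv.ext
  rw [ofConv_toConv, LinearMap.comp_id, ofConv_toConv] at h
  rw [← h]
  ext x
  simp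

end

variable (k H) in
/-- The embedding `x ↦ x ⊗ 1`, as an element of the convolution algebra of maps `H → H ⊗ H`. -/
abbrev tensorInl : H →ₗ[k] H ⊗[k] H :=
  (Algebra.TensorProduct.includeLeft : H →ₐ[k] H ⊗[k] H).toLinearMap

variable (k H) in
/-- The embedding `x ↦ 1 ⊗ x`, as an element of the convolution algebra of maps `H → H ⊗ H`. -/
abbrev tensorInr : H →ₗ[k] H ⊗[k] H :=
  (Algebra.TensorProduct.includeRight : H →ₐ[k] H ⊗[k] H).toLinearMap

variable (k H) in
theorem comul_eq_tensorInl_convMul_tensorInr :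
    toConv (comul (R := k) (A := H)) = toConv (tensorInl k H) * toConv (tensorInr k H) := by
  ext x
  rw [(ℛ k x).convMul_apply]
  simp [(ℛ k x).eq]

theorem sum_comul_mul_one_tmul_antipode (x : H) :
    ∑ i ∈ (ℛ k x).index, comul ((ℛ k x).left i) *
      ((1 : H) ⊗ₜ[k] antipode k ((ℛ k x).right i)) = x ⊗ₜ 1 := by
  have h : toConv (comul (R := k) (A := H)) * toConv (tensorInr k H ∘ₗ antipode k) =
      toConv (tensorInl k H) := by
    rw [comul_eq_tensorInl_convMul_tensorInr, mul_assoc, algHom_convMul_comp_antipode, mul_one]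
  have hx := LinearMap.congr_fun (congrArg ofConv h) x
  rwa [(ℛ k x).convMul_apply] at hx

theorem comul_antipode (x : H) : comul (R := k) (antipode k x) =
    TensorProduct.map (antipode k) (antipode k) (TensorProduct.comm k H H (comul x)) := by
  have hprod : toConv (TensorProduct.map (antipode k) (antipode k) ∘ₗ
      (TensorProduct.comm k H H).toLinearMap ∘ₗ comul (R := k) (A := H)) =
      toConv (tensorInr k H ∘ₗ antipode k) * toConv (tensorInl k H ∘ₗ antipode k) := by
    ext y
    rw [(ℛ k y).convMul_apply]
    simp [← (ℛ k y).eq]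
  have hleft : toConv (TensorProduct.map (antipode k) (antipode k) ∘ₗ
      (TensorProduct.comm k H H).toLinearMap ∘ₗ comul (R := k) (A := H)) *
      toConv (comul (R := k) (A := H)) = 1 := by
    rw [hprod, comul_eq_tensorInl_convMul_tensorInr, mul_assoc,
      ← mul_assoc _ (toConv (tensorInl k H)), comp_antipode_convMul_algHom, one_mul,
      comp_antipode_convMul_algHom]
  have h := left_inv_eq_right_inv hleft LinearMap.comul_right_inv
  exact (LinearMap.congr_fun (congrArg ofConv h) x).symm

theorem sum_lTensor_antipode_comul_mul (x : H) :
    ∑ i ∈ (ℛ k x).index, (antipode k).lTensor H (comul ((ℛ k x).left i)) *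
      ((1 : H) ⊗ₜ[k] (ℛ k x).right i) = x ⊗ₜ 1 := by
  have hcomul : toConv ((antipode k).lTensor H ∘ₗ comul (R := k) (A := H)) =
      toConv (tensorInl k H) * toConv (tensorInr k H ∘ₗ antipode k) := by
    ext y
    rw [(ℛ k y).convMul_apply]
    simp [← (ℛ k y).eq]
  have h : toConv ((antipode k).lTensor H ∘ₗ comul (R := k) (A := H)) *
      toConv (tensorInr k H) = toConv (tensorInl k H) := by
    rw [hcomul, mul_assoc, comp_antipode_convMul_algHom, mul_one]
  have hx := LinearMap.congr_fun (congrArg ofConv h) x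
  rwa [(ℛ k x).convMul_apply] at hx

theorem sum_lTensor_antipode_comul_mul_mul (x : H) (t : H ⊗[k] H) :
    ∑ i ∈ (ℛ k x).index, (antipode k).lTensor H (comul ((ℛ k x).left i) * t) *
      ((1 : H) ⊗ₜ[k] (ℛ k x).right i) = (x ⊗ₜ 1) * (antipode k).lTensor H t := by
  induction t with
  | zero => simp
  | add s t hs ht => simp only [mul_add, map_add, add_mul, Finset.sum_add_distrib, hs, ht]
  | tmul p q =>
    have hpq (s : H ⊗[k] H) (r : H) :
        (antipode k).lTensor H (s * (p ⊗ₜ q)) * ((1 : H) ⊗ₜ[k] r) =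
        TensorProduct.map (LinearMap.mulRight k p) (LinearMap.mulLeft k (antipode k q))
          ((antipode k).lTensor H s * ((1 : H) ⊗ₜ[k] r)) := by
      induction s with
      | zero => simp
      | add a b ha hb => simp only [add_mul, map_add, ha, hb]
      | tmul a b => simp [antipode_mul_antidistrib, mul_assoc]
    simp only [hpq]
    rw [← map_sum, sum_lTensor_antipode_comul_mul]
    simp

variable (k) in
/-- Left integrals: `L` spans a trivial submodule of the left regular module. -/
def IsLeftIntegral (L : H) : Prop := ∀ x : H, x * L = counit (R := k) x • L

variable (k) in
/-- Right integrals: `L` spans a trivial submodule of the right regular module. -/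
def IsRightIntegral (L : H) : Prop := ∀ x : H, L * x = counit (R := k) x • L

theorem IsLeftIntegral.casimir {L : H} (hL : IsLeftIntegral k L) (x : H) :
    (x ⊗ₜ 1) * (antipode k).lTensor H (comul L) =
      (antipode k).lTensor H (comul L) * ((1 : H) ⊗ₜ[k] x) := by
  rw [← sum_lTensor_antipode_comul_mul_mul]
  simp only [← Bialgebra.comul_mul, hL _, map_smul, smul_mul_assoc]
  simp only [← mul_smul_comm, ← Finset.mul_sum, ← TensorProduct.tmul_smul]
  rw [← TensorProduct.tmul_sum, Coalgebra.sum_counit_smul]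

end Casimir

/-! ### The dual Hopf algebra -/

section Dual

open TensorProduct Coalgebra HopfAlgebra WithConv

/-- The dual of `H`, with the convolution product. -/
def ConvDual (k H : Type*) [CommRing k] [Ring H] [HopfAlgebra k H] : Type _ :=
  WithConv (H →ₗ[k] k)

namespace ConvDual

variable {k H : Type*} [CommRing k] [Ring H] [HopfAlgebra k H]

noncomputable instance : Ring (ConvDual k H) := inferInstanceAs (Ring (WithConv (H →ₗ[k] k)))

noncomputable instance : Algebra k (ConvDual k H) :=
  inferInstanceAs (Algebra k (WithConv (H →ₗ[k] k)))

instance : FunLike (ConvDual k H) H k where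
  coe φ := φ.ofConv
  coe_injective _ _ h := WithConv.ext (DFunLike.coe_injective h)

instance : LinearMapClass (ConvDual k H) k H k where
  map_add φ := map_add φ.ofConv
  map_smulₛₗ φ := map_smul φ.ofConv

variable (k H) in
/-- The functional underlying an element of the convolution algebra. -/
def toDual : ConvDual k H ≃ₗ[k] (H →ₗ[k] k) where
  toFun φ := φ.ofConv
  invFun f := toConv f
  map_add' _ _ := rfl
  map_smul' _ _ := rfl

@[simp] theorem toDual_apply (φ : ConvDual k H) (x : H) : toDual k H φ x = φ x := rfl

@[ext] theorem ext {φ ψ : ConvDual k H} (h : ∀ x, φ x = ψ x) : φ = ψ := DFunLike.ext _ _ h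

@[simp] theorem zero_apply (x : H) : (0 : ConvDual k H) x = 0 := rfl

@[simp] theorem add_apply (φ ψ : ConvDual k H) (x : H) : (φ + ψ) x = φ x + ψ x := rfl

@[simp] theorem smul_apply (c : k) (φ : ConvDual k H) (x : H) : (c • φ) x = c * φ x := rfl

@[simp] theorem one_apply (x : H) : (1 : ConvDual k H) x = counit (R := k) x := rfl

/-- The functional `x ⊗ y ↦ φ x * ψ y` on `H ⊗ H`. -/
noncomputable def pairing (φ ψ : ConvDual k H) : H ⊗[k] H →ₗ[k] k :=
  LinearMap.mul' k k ∘ₗ TensorProduct.map (toDual k H φ) (toDual k H ψ)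

@[simp] theorem pairing_tmul (φ ψ : ConvDual k H) (x y : H) :
    pairing φ ψ (x ⊗ₜ y) = φ x * ψ y := rfl

theorem mul_apply (φ ψ : ConvDual k H) (x : H) : (φ * ψ) x = pairing φ ψ (comul x) := rfl

/-- Evaluation at `x`, as a functional on the dual. -/
noncomputable def eval (x : H) : ConvDual k H →ₗ[k] k :=
  LinearMap.applyₗ x ∘ₗ (toDual k H).toLinearMap

@[simp] theorem eval_apply (x : H) (φ : ConvDual k H) : eval x φ = φ x := rfl

variable [Module.Finite k H] [Module.Free k H]

instance : Module.Finite k (ConvDual k H) := .equiv (toDual k H).symm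

instance : Module.Free k (ConvDual k H) := .of_equiv (toDual k H).symm

variable (k H) in
/-- Tensors of functionals on `H` are the functionals on `H ⊗ H`. -/
noncomputable def tensorEquiv : ConvDual k H ⊗[k] ConvDual k H ≃ₗ[k] (H ⊗[k] H →ₗ[k] k) :=
  TensorProduct.congr (toDual k H) (toDual k H) ≪≫ₗ
    dualDistribEquiv k H H

@[simp] theorem tensorEquiv_tmul (φ ψ : ConvDual k H) :
    tensorEquiv k H (φ ⊗ₜ ψ) = pairing φ ψ := rfl

variable (k H) in
/-- Triple tensors of functionals on `H` are the functionals on `H ⊗ (H ⊗ H)`. -/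
noncomputable def tensorEquiv₃ :
    ConvDual k H ⊗[k] (ConvDual k H ⊗[k] ConvDual k H) ≃ₗ[k] (H ⊗[k] (H ⊗[k] H) →ₗ[k] k) :=
  TensorProduct.congr (toDual k H) (tensorEquiv k H) ≪≫ₗ
    dualDistribEquiv k H (H ⊗[k] H)

theorem tensorEquiv₃_tmul (φ : ConvDual k H) (t : ConvDual k H ⊗[k] ConvDual k H) :
    tensorEquiv₃ k H (φ ⊗ₜ t) =
      LinearMap.mul' k k ∘ₗ TensorProduct.map (toDual k H φ) (tensorEquiv k H t) := rfl

theorem mul'_apply (t : ConvDual k H ⊗[k] ConvDual k H) (x : H) :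
    LinearMap.mul' k (ConvDual k H) t x = tensorEquiv k H t (comul x) := by
  induction t with
  | zero => simp
  | add s t hs ht => simp only [map_add, add_apply, LinearMap.add_apply, hs, ht]
  | tmul φ ψ => rfl

noncomputable instance : CoalgebraStruct k (ConvDual k H) where
  comul := (tensorEquiv k H).symm.toLinearMap ∘ₗ LinearMap.lcomp k k (LinearMap.mul' k H) ∘ₗ
    (toDual k H).toLinearMap
  counit := eval 1

@[simp] theorem counit_apply (φ : ConvDual k H) : counit (R := k) φ = φ 1 := rfl

@[simp] theorem tensorEquiv_comul (φ : ConvDual k H) :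
    tensorEquiv k H (comul φ) = toDual k H φ ∘ₗ LinearMap.mul' k H :=
  (tensorEquiv k H).apply_symm_apply _

theorem tensorEquiv₃_assoc_tmul (t : ConvDual k H ⊗[k] ConvDual k H) (φ : ConvDual k H)
    (x y z : H) : tensorEquiv₃ k H (TensorProduct.assoc k _ _ _ (t ⊗ₜ φ)) (x ⊗ₜ (y ⊗ₜ z)) =
      tensorEquiv k H t (x ⊗ₜ y) * φ z := by
  induction t with
  | zero => simp
  | add s t hs ht => simp only [add_tmul, map_add, LinearMap.add_apply, hs, ht, add_mul]
  | tmul ψ χ => simp [tensorEquiv₃_tmul, mul_assoc]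

theorem tensorEquiv₃_assoc_rTensor_comul (t : ConvDual k H ⊗[k] ConvDual k H) (x y z : H) :
    tensorEquiv₃ k H (TensorProduct.assoc k _ _ _ (comul.rTensor (ConvDual k H) t))
      (x ⊗ₜ (y ⊗ₜ z)) = tensorEquiv k H t ((x * y) ⊗ₜ z) := by
  induction t with
  | zero => simp
  | add s t hs ht => simp only [map_add, LinearMap.add_apply, hs, ht]
  | tmul φ ψ => simp [tensorEquiv₃_assoc_tmul]

theorem tensorEquiv₃_lTensor_comul (t : ConvDual k H ⊗[k] ConvDual k H) (x y z : H) :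
    tensorEquiv₃ k H (comul.lTensor (ConvDual k H) t) (x ⊗ₜ (y ⊗ₜ z)) =
      tensorEquiv k H t (x ⊗ₜ (y * z)) := by
  induction t with
  | zero => simp
  | add s t hs ht => simp only [map_add, LinearMap.add_apply, hs, ht]
  | tmul φ ψ => simp [tensorEquiv₃_tmul]

theorem lid_rTensor_counit_apply (t : ConvDual k H ⊗[k] ConvDual k H) (x : H) :
    TensorProduct.lid k _ (counit.rTensor (ConvDual k H) t) x = tensorEquiv k H t (1 ⊗ₜ x) := by
  induction t with
  | zero => simp
  | add s t hs ht => simp only [map_add, add_apply, LinearMap.add_apply, hs, ht]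
  | tmul φ ψ => simp

theorem rid_lTensor_counit_apply (t : ConvDual k H ⊗[k] ConvDual k H) (x : H) :
    TensorProduct.rid k _ (counit.lTensor (ConvDual k H) t) x = tensorEquiv k H t (x ⊗ₜ 1) := by
  induction t with
  | zero => simp
  | add s t hs ht => simp only [map_add, add_apply, LinearMap.add_apply, hs, ht]
  | tmul φ ψ => simp [mul_comm]

noncomputable instance : Coalgebra k (ConvDual k H) where
  coassoc := by
    ext φ : 1
    apply (tensorEquiv₃ k H).injective
    ext x y z
    simp [tensorEquiv₃_assoc_rTensor_comul, tensorEquiv₃_lTensor_comul, mul_assoc]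
  rTensor_counit_comp_comul := by
    ext φ : 1
    apply (TensorProduct.lid k _).injective
    ext x
    simp [lid_rTensor_counit_apply]
  lTensor_counit_comp_comul := by
    ext φ : 1
    apply (TensorProduct.rid k _).injective
    ext x
    simp [rid_lTensor_counit_apply]

theorem tensorEquiv_mul (s t : ConvDual k H ⊗[k] ConvDual k H) :
    tensorEquiv k H (s * t) =
      (toConv (tensorEquiv k H s) * toConv (tensorEquiv k H t)).ofConv := by
  induction s with
  | zero => simp
  | add a b ha hb => simp only [map_add, add_mul, toConv_add, ofConv_add, ha, hb]
  | tmul φ φ' =>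
    induction t with
    | zero => simp
    | add a b ha hb => simp only [map_add, mul_add, toConv_add, ofConv_add, ha, hb]
    | tmul ψ ψ' =>
      have h := LinearMap.algHom_comp_convMul_distrib (Algebra.TensorProduct.lmul' k (S := k))
        (toConv (TensorProduct.map (toDual k H φ) (toDual k H φ')))
        (toConv (TensorProduct.map (toDual k H ψ) (toDual k H ψ')))
      rw [TensorProduct.map_convMul_map, Algebra.TensorProduct.lmul'_toLinearMap] at h
      rw [Algebra.TensorProduct.tmul_mul_tmul]
      exact h

noncomputable instance : Bialgebra k (ConvDual k H) :=
  .mk' k (ConvDual k H) (by simp)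
    (by
      intro φ ψ
      simp [mul_apply, Algebra.TensorProduct.one_def])
    (by
      apply (tensorEquiv k H).injective
      ext x y
      simp [Algebra.TensorProduct.one_def])
    (by
      intro φ ψ
      apply (tensorEquiv k H).injective
      rw [tensorEquiv_mul, tensorEquiv_comul, tensorEquiv_comul, tensorEquiv_comul]
      exact LinearMap.convMul_comp_coalgHom_distrib φ ψ (Bialgebra.mulCoalgHom k H))

variable (k H) in
/-- Precomposition with the antipode. -/
noncomputable def compAntipode : ConvDual k H →ₗ[k] ConvDual k H :=
  (toDual k H).symm.toLinearMap ∘ₗ LinearMap.lcomp k k (antipode k) ∘ₗ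
    (toDual k H).toLinearMap

theorem tensorEquiv_rTensor_compAntipode (t : ConvDual k H ⊗[k] ConvDual k H) :
    tensorEquiv k H ((compAntipode k H).rTensor _ t) =
      tensorEquiv k H t ∘ₗ (antipode k).rTensor H := by
  induction t with
  | zero => simp
  | add s t hs ht => simp only [map_add, LinearMap.add_comp, hs, ht]
  | tmul φ ψ => ext; rfl

theorem tensorEquiv_lTensor_compAntipode (t : ConvDual k H ⊗[k] ConvDual k H) :
    tensorEquiv k H ((compAntipode k H).lTensor _ t) =
      tensorEquiv k H t ∘ₗ (antipode k).lTensor H := by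
  induction t with
  | zero => simp
  | add s t hs ht => simp only [map_add, LinearMap.add_comp, hs, ht]
  | tmul φ ψ => ext; rfl

noncomputable instance : HopfAlgebra k (ConvDual k H) where
  antipode := compAntipode k H
  mul_antipode_rTensor_comul := by
    ext φ x
    simp [mul'_apply, tensorEquiv_rTensor_compAntipode,
      Algebra.algebraMap_eq_smul_one, mul_comm]
  mul_antipode_lTensor_comul := by
    ext φ x
    simp [mul'_apply, tensorEquiv_lTensor_compAntipode,
      Algebra.algebraMap_eq_smul_one, mul_comm]

@[simp] theorem antipode_apply (φ : ConvDual k H) (x : H) : antipode k φ x = φ (antipode k x) := rfl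

end ConvDual

end Dual

/-! ### Characters of split semisimple algebras -/

section Wedderburn

open TensorProduct

variable {k A ι : Type*} [Field k] [Ring A] [Algebra k A] {d : ι → ℕ}
  (e : A ≃ₐ[k] ∀ i, Matrix (Fin (d i)) (Fin (d i)) k)

/-- The irreducible representation of `A` on the `i`-th block. -/
def blockRep (i : ι) : A →ₐ[k] Matrix (Fin (d i)) (Fin (d i)) k :=
  (Pi.evalAlgHom k (fun i => Matrix (Fin (d i)) (Fin (d i)) k) i).comp e.toAlgHom

theorem blockRep_ext {x y : A} (h : ∀ i, blockRep e i x = blockRep e i y) : x = y :=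
  e.injective (funext h)

/-- The character of the `i`-th irreducible representation. -/
def character (i : ι) : A →ₗ[k] k :=
  Matrix.traceLinearMap (Fin (d i)) k k ∘ₗ (blockRep e i).toLinearMap

theorem character_apply (i : ι) (x : A) : character e i x = (blockRep e i x).trace := rfl

theorem character_one (i : ι) : character e i 1 = d i := by simp [character_apply]

/-- Functionals vanishing on commutators: over a split semisimple algebra, the class functions. -/
def IsTraceFunction (f : A → k) : Prop := ∀ x y, f (x * y) = f (y * x)

theorem isTraceFunction_character (i : ι) : IsTraceFunction (character e i) := fun x y => by
  simp only [character_apply, map_mul]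
  exact Matrix.trace_mul_comm _ _

theorem sum_dim_sq_eq_finrank [Fintype ι]
    (e : A ≃ₐ[k] ∀ i, Matrix (Fin (d i)) (Fin (d i)) k) :
    ∑ i, d i ^ 2 = Module.finrank k A := by
  rw [e.toLinearEquiv.finrank_eq, Module.finrank_pi_fintype]
  simp [Module.finrank_matrix, sq]

theorem exists_natCast_eq_trace_of_isIdempotentElem {n : Type*} [Fintype n] {M : Matrix n n k}
    (hM : IsIdempotentElem M) : ∃ m : ℕ, (m : k) = M.trace := by
  classical
  have h := (LinearMap.IsIdempotentElem.isProj_range _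
    (hM.map (Matrix.toLinAlgEquiv' (R := k)))).trace
  exact ⟨_, h.symm.trans (Matrix.trace_toLin'_eq M)⟩

theorem exists_natCast_eq_character_of_isIdempotentElem (i : ι) {x : A} (hx : IsIdempotentElem x) :
    ∃ m : ℕ, (m : k) = character e i x :=
  exists_natCast_eq_trace_of_isIdempotentElem (hx.map (blockRep e i))

theorem character_tensor_character_apply (i j : ι) (t : A ⊗[k] A) :
    LinearMap.mul' k k (TensorProduct.map (character e i) (character e j) t) =
      (Matrix.kroneckerAlgEquiv (Fin (d i)) (Fin (d j)) k
        (Algebra.TensorProduct.map (blockRep e i) (blockRep e j) t)).trace := by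
  induction t with
  | zero => simp
  | add s t hs ht => simp only [map_add, hs, ht, Matrix.trace_add]
  | tmul x y => simp [character_apply, Matrix.trace_kronecker]

theorem exists_natCast_eq_character_tensor_character_of_isIdempotentElem (i j : ι)
    {t : A ⊗[k] A} (ht : IsIdempotentElem t) :
    ∃ m : ℕ, (m : k) =
      LinearMap.mul' k k (TensorProduct.map (character e i) (character e j) t) := by
  rw [character_tensor_character_apply]
  exact exists_natCast_eq_trace_of_isIdempotentElem ((ht.map _).map _)

variable [DecidableEq ι]

/-- The element of `A` whose only nonzero block is the matrix unit `E_ab` in block `i`. -/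
def matrixUnit (i : ι) (a b : Fin (d i)) : A := e.symm (Pi.single i (Matrix.single a b 1))

@[simp] theorem blockRep_matrixUnit_self (i : ι) (a b : Fin (d i)) :
    blockRep e i (matrixUnit e i a b) = Matrix.single a b 1 := by
  simp [blockRep, matrixUnit]

theorem blockRep_matrixUnit_of_ne {i j : ι} (h : i ≠ j) (a b : Fin (d i)) :
    blockRep e j (matrixUnit e i a b) = 0 := by
  simp [blockRep, matrixUnit, h.symm]

@[simp] theorem matrixUnit_mul_matrixUnit_same (i : ι) (a b c : Fin (d i)) :
    matrixUnit e i a b * matrixUnit e i b c = matrixUnit e i a c := by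
  simp [matrixUnit, ← map_mul, ← Pi.single_mul]

theorem matrixUnit_mul_matrixUnit_of_ne (i : ι) {b c : Fin (d i)} (h : b ≠ c) (a a' : Fin (d i)) :
    matrixUnit e i a b * matrixUnit e i c a' = 0 := by
  simp [matrixUnit, ← map_mul, ← Pi.single_mul, h]

theorem linearMap_ext_matrixUnit [Finite ι] {M : Type*} [AddCommMonoid M] [Module k M]
    {f g : A →ₗ[k] M} (h : ∀ i a b, f (matrixUnit e i a b) = g (matrixUnit e i a b)) : f = g := by
  have h' : f ∘ₗ e.symm.toLinearMap = g ∘ₗ e.symm.toLinearMap :=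
    LinearMap.pi_ext' fun i => Matrix.ext_linearMap k fun a b => LinearMap.ext_ring (h i a b)
  ext x
  simpa using LinearMap.congr_fun h' (e x)

theorem character_mul_matrixUnit_self (i : ι) (a b : Fin (d i)) (x : A) :
    character e i (x * matrixUnit e i a b) = blockRep e i x b a := by
  simp [character_apply, Matrix.trace_mul_single]

theorem character_mul_matrixUnit_of_ne {i j : ι} (h : i ≠ j) (a b : Fin (d i)) (x : A) :
    character e j (x * matrixUnit e i a b) = 0 := by
  simp [character_apply, blockRep_matrixUnit_of_ne e h]

omit [DecidableEq ι] in
theorem eq_zero_of_character_mul_eq_zero {x : A} (h : ∀ i y, character e i (x * y) = 0) :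
    x = 0 := by
  classical
  refine blockRep_ext e fun i => ?_
  ext a b
  simpa [character_mul_matrixUnit_self] using h i (matrixUnit e i b a)

theorem sum_character_mul_matrixUnit_mul (i j : ι) (a : Fin (d i)) (x y : A) :
    ∑ b, character e i (x * matrixUnit e i b a) * character e j (y * matrixUnit e i a b) =
      if i = j then character e i (x * y * matrixUnit e i a a) else 0 := by
  split_ifs with h
  · subst h
    simp [character_mul_matrixUnit_self, Matrix.mul_apply]
  · simp [character_mul_matrixUnit_of_ne e h]

theorem sum_character_conj_matrixUnit (i : ι) (a : Fin (d i)) (x : A) :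
    ∑ b, character e i (matrixUnit e i a b * x * matrixUnit e i b a) = character e i x := by
  simp only [mul_assoc, isTraceFunction_character e i (matrixUnit e i a _),
    matrixUnit_mul_matrixUnit_same, character_mul_matrixUnit_self]
  rfl

/- For a Casimir element `t` the conjugation by matrix units which computes the trace of the first
leg can be moved to the second leg. -/
theorem character_tensor_character_of_casimir {t : A ⊗[k] A}
    (ht : ∀ x : A, (x ⊗ₜ 1) * t = t * (1 ⊗ₜ x)) (i j : ι) (a : Fin (d i)) :
    LinearMap.mul' k k (TensorProduct.map (character e i) (character e j) t) =
      if i = j then character e i (LinearMap.mul' k A t * matrixUnit e i a a) else 0 := by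
  have hconj (s : A ⊗[k] A) :
      LinearMap.mul' k k (TensorProduct.map (character e i) (character e j) s) =
        ∑ b, LinearMap.mul' k k (TensorProduct.map (character e i) (character e j)
          (matrixUnit e i a b ⊗ₜ 1 * s * matrixUnit e i b a ⊗ₜ 1)) := by
    induction s with
    | zero => simp
    | add s t hs ht => simp only [map_add, mul_add, add_mul, Finset.sum_add_distrib, hs, ht]
    | tmul x y => simp [← Finset.sum_mul, sum_character_conj_matrixUnit]
  have hsum (s : A ⊗[k] A) :
      ∑ b, LinearMap.mul' k k (TensorProduct.map (character e i) (character e j)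
          (s * (matrixUnit e i b a ⊗ₜ matrixUnit e i a b))) =
        if i = j then character e i (LinearMap.mul' k A s * matrixUnit e i a a) else 0 := by
    induction s with
    | zero => simp
    | add s t hs ht =>
      simp only [map_add, add_mul, Finset.sum_add_distrib, hs, ht]
      split_ifs <;> simp
    | tmul x y => simp [sum_character_mul_matrixUnit_mul]
  simp only [hconj t, ht, mul_assoc, Algebra.TensorProduct.tmul_mul_tmul, one_mul, mul_one, hsum]

variable [∀ i, NeZero (d i)]

/-- A primitive idempotent of the `i`-th block. -/
def primitiveIdempotent (i : ι) : A := matrixUnit e i 0 0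

theorem isIdempotentElem_primitiveIdempotent (i : ι) :
    IsIdempotentElem (primitiveIdempotent e i) := matrixUnit_mul_matrixUnit_same e i 0 0 0

theorem character_primitiveIdempotent (i j : ι) :
    character e j (primitiveIdempotent e i) = if i = j then 1 else 0 := by
  split_ifs with h
  · subst h
    simp [character_apply, primitiveIdempotent]
  · simpa [primitiveIdempotent] using character_mul_matrixUnit_of_ne e h 0 0 1

theorem primitiveIdempotent_mul_of_ne {i j : ι} (h : i ≠ j) :
    primitiveIdempotent e i * primitiveIdempotent e j = 0 := by
  refine blockRep_ext e fun l => ?_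
  by_cases hi : i = l
  · simp [primitiveIdempotent, blockRep_matrixUnit_of_ne e (fun hj => h (hi.trans hj.symm) : j ≠ l)]
  · simp [primitiveIdempotent, blockRep_matrixUnit_of_ne e hi]

omit [DecidableEq ι] in
theorem character_injective : Function.Injective (character e) := fun i j h => by
  classical
  by_contra hij
  simpa [character_primitiveIdempotent, hij] using
    LinearMap.congr_fun h (primitiveIdempotent e i)

theorem IsTraceFunction.apply_matrixUnit {f : A →ₗ[k] k} (hf : IsTraceFunction f) (i : ι)
    (a b : Fin (d i)) :
    f (matrixUnit e i a b) = if a = b then f (primitiveIdempotent e i) else 0 := by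
  rw [← matrixUnit_mul_matrixUnit_same e i a 0 b, hf]
  split_ifs with h
  · rw [h, matrixUnit_mul_matrixUnit_same, primitiveIdempotent]
  · rw [matrixUnit_mul_matrixUnit_of_ne e i (Ne.symm h), map_zero]

theorem IsTraceFunction.eq_sum_smul_character [Fintype ι] {f : A →ₗ[k] k}
    (hf : IsTraceFunction f) : f = ∑ i, f (primitiveIdempotent e i) • character e i := by
  refine linearMap_ext_matrixUnit e fun i a b => ?_
  simp [hf.apply_matrixUnit, (isTraceFunction_character e _).apply_matrixUnit,
    character_primitiveIdempotent]

theorem mul_primitiveIdempotent {i : ι} (hi : d i = 1) (x : A) :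
    x * primitiveIdempotent e i = character e i x • primitiveIdempotent e i := by
  have : Subsingleton (Fin (d i)) := by rw [hi]; infer_instance
  refine blockRep_ext e fun j => ?_
  by_cases h : i = j
  · subst h
    ext a b
    simp [primitiveIdempotent, character_apply, Matrix.trace, Subsingleton.elim a 0,
      Subsingleton.elim b 0, Fintype.sum_subsingleton _ (0 : Fin (d i))]
  · simp [primitiveIdempotent, blockRep_matrixUnit_of_ne e h]

omit [DecidableEq ι] in
theorem exists_algHom_eq_character {i : ι} (hi : d i = 1) :
    ∃ φ : A →ₐ[k] k, φ.toLinearMap = character e i := by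
  classical
  refine ⟨.ofLinearMap (character e i) (by simp [character_one, hi]) fun x y => ?_, rfl⟩
  have h : character e i (x * y) • primitiveIdempotent e i =
      (character e i x * character e i y) • primitiveIdempotent e i := by
    rw [← mul_primitiveIdempotent e hi, mul_assoc, mul_primitiveIdempotent e hi, mul_smul_comm,
      mul_primitiveIdempotent e hi, smul_smul, mul_comm]
  simpa [character_primitiveIdempotent] using congrArg (character e i) h

omit [DecidableEq ι] in
theorem exists_character_eq_algHom [Finite ι] (φ : A →ₐ[k] k) :
    ∃ i, character e i = φ.toLinearMap := by
  classical
  cases nonempty_fintype ι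
  have hφ := IsTraceFunction.eq_sum_smul_character e (f := φ.toLinearMap)
    fun x y => by simp [mul_comm]
  obtain ⟨i, hi⟩ : ∃ i, φ (primitiveIdempotent e i) ≠ 0 := by
    by_contra! h
    simpa [h] using LinearMap.congr_fun hφ 1
  have hi1 : φ (primitiveIdempotent e i) = 1 :=
    (IsIdempotentElem.iff_eq_zero_or_one.mp
      ((isIdempotentElem_primitiveIdempotent e i).map φ)).resolve_left hi
  have hj (j : ι) (hij : j ≠ i) : φ (primitiveIdempotent e j) = 0 := by
    simpa [hi1] using congrArg φ (primitiveIdempotent_mul_of_ne e hij)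
  exact ⟨i, by rw [hφ, Finset.sum_eq_single i] <;> simp +contextual [hi1, hj]⟩

end Wedderburn

/-! ### The fusion ring of a semisimple Hopf algebra -/

section Antipode

open TensorProduct Coalgebra HopfAlgebra

variable {k H : Type*} [CommRing k] [Ring H] [HopfAlgebra k H]

theorem IsLeftIntegral.isRightIntegral_antipode {L : H} (hL : IsLeftIntegral k L)
    (hS : Function.Surjective (antipode k : H → H)) : IsRightIntegral k (antipode k L) := by
  intro x
  obtain ⟨y, rfl⟩ := hS x
  rw [← antipode_mul_antidistrib, hL, map_smul, counit_antipode]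

theorem IsLeftIntegral.antipode_eq {L : H} (hL : IsLeftIntegral k L)
    (hS : Function.Surjective (antipode k : H → H)) (hL1 : counit (R := k) L = 1) :
    antipode k L = L := by
  have h := (hL.isRightIntegral_antipode hS L).symm.trans (hL (antipode k L))
  simpa [hL1, counit_antipode] using h

end Antipode

open Finset in
/-- Over the natural numbers, an invertible matrix is a permutation matrix. -/
theorem exists_injective_of_sum_mul_eq_ite {ι : Type*} [Fintype ι] [DecidableEq ι]
    {c m : ι → ι → ℕ} (h : ∀ i j, ∑ l, c j l * m i l = if i = j then 1 else 0) :
    ∃ s : ι → ι, s.Injective ∧ (∀ i j, c i j = if s i = j then 1 else 0) ∧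
      ∀ i j, m i j = if s i = j then 1 else 0 := by
  have hdiag (i : ι) : ∃ j, c i j = 1 ∧ m i j = 1 := by
    have hi : ∑ l, c i l * m i l = 1 := by simp [h]
    obtain ⟨j, -, hj⟩ := exists_ne_zero_of_sum_ne_zero (hi ▸ one_ne_zero)
    have hle := single_le_sum (f := fun l => c i l * m i l) (fun _ _ => Nat.zero_le _) (mem_univ j)
    exact ⟨j, mul_eq_one.mp (by lia)⟩
  choose s hc hm using hdiag
  have hoff {i j : ι} (hij : i ≠ j) (l : ι) : c j l * m i l = 0 :=
    sum_eq_zero_iff.mp ((h i j).trans (if_neg hij)) l (mem_univ l)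
  have hs : s.Injective := fun i j hij => by
    by_contra hne
    have h := hoff hne (s i)
    rw [hm, hij, hc] at h
    exact one_ne_zero h
  have hsurj : s.Surjective := Finite.surjective_of_injective hs
  refine ⟨s, hs, fun i j => ?_, fun i j => ?_⟩ <;> obtain ⟨l, rfl⟩ := hsurj j <;>
    obtain rfl | hil := eq_or_ne i l
  · simp [hc]
  · simpa [hs.ne hil, hm] using hoff hil.symm (s l)
  · simp [hm]
  · simpa [hs.ne hil, hc] using hoff hil (s l)

section FusionRing

open Finset TensorProduct Coalgebra HopfAlgebra

variable {k H ι : Type*} [Field k] [Ring H] [HopfAlgebra k H] {d : ι → ℕ}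
  (e : H ≃ₐ[k] ∀ i, Matrix (Fin (d i)) (Fin (d i)) k)

/-- The character of the `i`-th irreducible representation, in the dual Hopf algebra. -/
noncomputable def irrChar (i : ι) : ConvDual k H := (ConvDual.toDual k H).symm (character e i)

@[simp] theorem irrChar_apply (i : ι) (x : H) : irrChar e i x = character e i x := rfl

theorem isTraceFunction_irrChar (i : ι) : IsTraceFunction (irrChar e i) :=
  isTraceFunction_character e i

theorem IsTraceFunction.pairing_mul_comm {φ ψ : ConvDual k H} (hφ : IsTraceFunction φ)
    (hψ : IsTraceFunction ψ) (s t : H ⊗[k] H) :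
    ConvDual.pairing φ ψ (s * t) = ConvDual.pairing φ ψ (t * s) := by
  induction s with
  | zero => simp
  | add s s' hs hs' => simp only [map_add, add_mul, mul_add, hs, hs']
  | tmul a b =>
    induction t with
    | zero => simp
    | add t t' ht ht' => simp only [map_add, add_mul, mul_add, ht, ht']
    | tmul x y => simp [hφ a x, hψ b y]

theorem IsTraceFunction.mul {φ ψ : ConvDual k H} (hφ : IsTraceFunction φ)
    (hψ : IsTraceFunction ψ) : IsTraceFunction (φ * ψ) := fun x y => by
  simp only [ConvDual.mul_apply, Bialgebra.comul_mul, hφ.pairing_mul_comm hψ]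

theorem exists_natCast_eq_irrChar_mul_of_isIdempotentElem (i j : ι) {x : H}
    (hx : IsIdempotentElem x) : ∃ m : ℕ, (m : k) = (irrChar e i * irrChar e j) x :=
  exists_natCast_eq_character_tensor_character_of_isIdempotentElem e i j
    (hx.map (Bialgebra.comulAlgHom k H))

section Dual

variable [Module.Finite k H]

theorem IsTraceFunction.antipode {φ : ConvDual k H} (hφ : IsTraceFunction φ) :
    IsTraceFunction ⇑(HopfAlgebra.antipode k φ) := fun x y => by
  simp only [ConvDual.antipode_apply, antipode_mul_antidistrib, hφ _ (HopfAlgebra.antipode k x)]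

theorem exists_natCast_eq_antipode_irrChar_of_isIdempotentElem (i : ι) {x : H}
    (hx : IsIdempotentElem x) : ∃ m : ℕ, (m : k) = antipode k (irrChar e i) x :=
  exists_natCast_eq_character_of_isIdempotentElem e i
    ((antipode_mul_antidistrib x x).symm.trans (congrArg _ hx))

theorem dim_eq_of_antipode_irrChar_eq [CharZero k] {i j : ι}
    (h : antipode k (irrChar e i) = irrChar e j) : d i = d j := by
  have h1 := DFunLike.congr_fun h 1
  rw [ConvDual.antipode_apply, antipode_one, irrChar_apply, irrChar_apply, character_one,
    character_one] at h1
  exact_mod_cast h1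

end Dual

theorem dim_eq_one_of_irrChar_eq_one [CharZero k] {i : ι} (hi : irrChar e i = 1) : d i = 1 := by
  have h : irrChar e i (1 : H) = 1 := by rw [hi]; simp
  rw [irrChar_apply, character_one] at h
  exact_mod_cast h

variable [DecidableEq ι] [∀ i, NeZero (d i)]

@[simp] theorem irrChar_primitiveIdempotent (i j : ι) :
    irrChar e j (primitiveIdempotent e i) = if i = j then 1 else 0 :=
  character_primitiveIdempotent e i j

omit [DecidableEq ι] in
theorem irrChar_injective : Function.Injective (irrChar e) :=
  (ConvDual.toDual k H).symm.injective.comp (character_injective e)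

theorem IsTraceFunction.eq_sum_smul_irrChar [Fintype ι] {φ : ConvDual k H}
    (hφ : IsTraceFunction φ) : φ = ∑ i, φ (primitiveIdempotent e i) • irrChar e i := by
  apply (ConvDual.toDual k H).injective
  simpa [irrChar] using IsTraceFunction.eq_sum_smul_character e (f := ConvDual.toDual k H φ) hφ

omit [DecidableEq ι] in
theorem exists_irrChar_eq_one [Finite ι] : ∃ i, irrChar e i = 1 :=
  (exists_character_eq_algHom e (Bialgebra.counitAlgHom k H)).imp fun _ h =>
    ConvDual.ext (LinearMap.congr_fun h)

section Unit

variable {z : ι} (hz : irrChar e z = 1)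
include hz

theorem counit_primitiveIdempotent :
    counit (R := k) (primitiveIdempotent e z) = 1 := by
  rw [← ConvDual.one_apply, ← hz, irrChar_primitiveIdempotent, if_pos rfl]

variable [CharZero k]

theorem isLeftIntegral_primitiveIdempotent : IsLeftIntegral k (primitiveIdempotent e z) :=
  fun x => by
    rw [mul_primitiveIdempotent e (dim_eq_one_of_irrChar_eq_one e hz), ← irrChar_apply, hz,
      ConvDual.one_apply]

variable [Module.Finite k H]

theorem irrChar_mul_antipode_irrChar_apply (i j : ι) :
    (irrChar e i * antipode k (irrChar e j)) (primitiveIdempotent e z) =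
      if i = j then 1 else 0 := by
  have hmul :
      LinearMap.mul' k H ((antipode k).lTensor H (comul (primitiveIdempotent e z))) = 1 := by
    rw [mul_antipode_lTensor_comul_apply, counit_primitiveIdempotent e hz, map_one]
  have h := character_tensor_character_of_casimir e
    (isLeftIntegral_primitiveIdempotent e hz).casimir i j 0
  rw [hmul, one_mul, ← primitiveIdempotent, character_primitiveIdempotent, if_pos rfl] at h
  rw [← h, LinearMap.lTensor, TensorProduct.map_map]
  rfl

theorem exists_antipode_irrChar_eq [Finite ι] :
    ∃ s : ι → ι, s.Injective ∧ (∀ i, antipode k (irrChar e i) = irrChar e (s i)) ∧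
      ∀ i j, (irrChar e i * irrChar e j) (primitiveIdempotent e z) = if s i = j then 1 else 0 := by
  cases nonempty_fintype ι
  choose c hc using fun i j => exists_natCast_eq_antipode_irrChar_of_isIdempotentElem e i
    (isIdempotentElem_primitiveIdempotent e j)
  choose m hm using fun i j => exists_natCast_eq_irrChar_mul_of_isIdempotentElem e i j
    (isIdempotentElem_primitiveIdempotent e z)
  have hexp (i : ι) : antipode k (irrChar e i) = ∑ j, (c i j : k) • irrChar e j := by
    simpa only [hc] using (isTraceFunction_irrChar e i).antipode.eq_sum_smul_irrChar e
  obtain ⟨s, hs, hcs, hms⟩ := exists_injective_of_sum_mul_eq_ite (c := c) (m := m) fun i j => by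
    have h := irrChar_mul_antipode_irrChar_apply e hz i j
    rw [hexp, ← ConvDual.eval_apply] at h
    simp only [mul_sum, mul_smul_comm, map_sum, map_smul, ConvDual.eval_apply, ← hm,
      smul_eq_mul] at h
    exact_mod_cast h
  refine ⟨s, hs, fun i => ?_, fun i j => ?_⟩
  · simp [hexp, hcs]
  · rw [← hm, hms]
    push_cast
    rfl

omit [DecidableEq ι] in
theorem antipode_bijective [Finite ι] : Function.Bijective (antipode k : H → H) := by
  classical
  obtain ⟨s, hs, hanti, -⟩ := exists_antipode_irrChar_eq e hz
  have hinj : Function.Injective (antipode k : H →ₗ[k] H) := by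
    refine (injective_iff_map_eq_zero _).mpr fun x hx => eq_zero_of_character_mul_eq_zero e
      fun i y => ?_
    obtain ⟨j, rfl⟩ := Finite.surjective_of_injective hs i
    rw [← irrChar_apply, ← hanti, ConvDual.antipode_apply, antipode_mul_antidistrib, hx, mul_zero,
      map_zero]
  exact ⟨hinj, LinearMap.surjective_of_injective hinj⟩

theorem antipode_apply_primitiveIdempotent [Finite ι] (φ : ConvDual k H) :
    antipode k φ (primitiveIdempotent e z) = φ (primitiveIdempotent e z) := by
  rw [ConvDual.antipode_apply, (isLeftIntegral_primitiveIdempotent e hz).antipode_eq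
    (antipode_bijective e hz).2 (counit_primitiveIdempotent e hz)]

omit [DecidableEq ι] in
theorem antipode_antipode_irrChar [Finite ι] (i : ι) :
    antipode k (antipode k (irrChar e i)) = irrChar e i := by
  classical
  obtain ⟨s, hs, hanti, horth⟩ := exists_antipode_irrChar_eq e hz
  have h := antipode_apply_primitiveIdempotent e hz (irrChar e i * irrChar e (s i))
  rw [antipode_mul_antidistrib, hanti, hanti, horth, horth, if_pos rfl] at h
  have hss : s (s i) = i := hs (by_contra fun hne => by simp [hne] at h)
  rw [hanti, hanti, hss]

theorem exists_fusionRule [Fintype ι] : ∃ F : FusionRule ι, F.unit = z ∧ F.dim = d := by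
  obtain ⟨s, hs, hanti, horth⟩ := exists_antipode_irrChar_eq e hz
  choose N hN using fun i j l => exists_natCast_eq_irrChar_mul_of_isIdempotentElem e i j
    (isIdempotentElem_primitiveIdempotent e l)
  have hmul (i j : ι) : irrChar e i * irrChar e j = ∑ l, (N i j l : k) • irrChar e l := by
    simpa only [hN] using
      ((isTraceFunction_irrChar e i).mul (isTraceFunction_irrChar e j)).eq_sum_smul_irrChar e
  have hss (i : ι) : s (s i) = i := irrChar_injective e <| by
    rw [← hanti, ← hanti, antipode_antipode_irrChar e hz]
  have htriple (i j l : ι) :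
      (irrChar e i * irrChar e j * irrChar e (s l)) (primitiveIdempotent e z) = N i j l := by
    rw [hmul, sum_mul, ← ConvDual.eval_apply, map_sum]
    simp [horth, hs.eq_iff]
  let F : FusionRule ι :=
    { dim := d
      mult := N
      unit := z
      dual := s
      dim_unit := dim_eq_one_of_irrChar_eq_one e hz
      dim_pos _ := Nat.pos_of_neZero _
      dual_dual := hss
      dim_dual i := (dim_eq_of_antipode_irrChar_eq e (hanti i)).symm
      dim_mul_dim i j := by
        have h := congrArg (ConvDual.eval 1) (hmul i j)
        simp only [ConvDual.eval_apply, ConvDual.mul_apply, Bialgebra.comul_one,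
          Algebra.TensorProduct.one_def, ConvDual.pairing_tmul, irrChar_apply, character_one,
          map_sum, map_smul, smul_eq_mul] at h
        exact_mod_cast h
      frobenius i j l := by
        have h := antipode_apply_primitiveIdempotent e hz
          (irrChar e i * irrChar e j * irrChar e (s l))
        rw [antipode_mul_antidistrib, antipode_mul_antidistrib, hanti, hanti, hanti, hss,
          ← mul_assoc, htriple, htriple] at h
        exact_mod_cast h.symm
      unit_mult j l := by
        have h := hN z j l
        rw [hz, one_mul, irrChar_primitiveIdempotent] at h
        simp only [eq_comm (a := j)]
        exact_mod_cast h }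
  exact ⟨F, rfl, rfl⟩

end Unit

theorem exists_algHom_ne_counit [CharZero k] [IsAlgClosed k] [Module.Finite k H]
    [IsSemisimpleRing H] (h1 : 1 < Module.finrank k H) (h60 : Module.finrank k H < 60) :
    ∃ φ : H →ₐ[k] k, φ ≠ Bialgebra.counitAlgHom k H := by
  obtain ⟨n, d, hd, ⟨e⟩⟩ := IsSemisimpleRing.exists_algEquiv_pi_matrix_of_isAlgClosed k H
  obtain ⟨z, hz⟩ := exists_irrChar_eq_one e
  obtain ⟨F, rfl, rfl⟩ := exists_fusionRule e hz
  rw [← sum_dim_sq_eq_finrank e] at h1 h60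
  obtain ⟨i, hi, hdim⟩ := F.exists_ne_unit_dim_eq_one h1 h60
  obtain ⟨φ, hφ⟩ := exists_algHom_eq_character e hdim
  refine ⟨φ, fun h => hi (character_injective e ?_)⟩
  rw [← hφ, h]
  exact LinearMap.ext fun x => (DFunLike.congr_fun hz x).symm

end FusionRing

/-! ### The trace form -/

section TraceForm

open TensorProduct Coalgebra HopfAlgebra

variable {k H : Type*} [CommRing k] [Ring H] [HopfAlgebra k H]

namespace ConvDual

/-- The slice map `x ⊗ y ↦ φ x • y`. -/
noncomputable def sliceLeft (φ : ConvDual k H) : H ⊗[k] H →ₗ[k] H :=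
  (TensorProduct.lid k H).toLinearMap ∘ₗ (toDual k H φ).rTensor H

@[simp] theorem sliceLeft_tmul (φ : ConvDual k H) (x y : H) :
    sliceLeft φ (x ⊗ₜ y) = φ x • y := rfl

/-- The slice map `x ⊗ y ↦ φ y • x`. -/
noncomputable def sliceRight (φ : ConvDual k H) : H ⊗[k] H →ₗ[k] H :=
  (TensorProduct.rid k H).toLinearMap ∘ₗ (toDual k H φ).lTensor H

@[simp] theorem sliceRight_tmul (φ : ConvDual k H) (x y : H) :
    sliceRight φ (x ⊗ₜ y) = φ y • x := rfl

theorem pairing_eq_apply_sliceLeft (φ ψ : ConvDual k H) (t : H ⊗[k] H) :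
    pairing φ ψ t = ψ (sliceLeft φ t) := by
  induction t with
  | zero => simp
  | add s t hs ht => simp only [map_add, hs, ht]
  | tmul x y => simp

theorem pairing_eq_apply_sliceRight (φ ψ : ConvDual k H) (t : H ⊗[k] H) :
    pairing φ ψ t = φ (sliceRight ψ t) := by
  induction t with
  | zero => simp
  | add s t hs ht => simp only [map_add, hs, ht]
  | tmul x y => simp [mul_comm]

theorem sliceRight_tmul_one_mul (φ : ConvDual k H) (x : H) (t : H ⊗[k] H) :
    sliceRight φ ((x ⊗ₜ 1) * t) = x * sliceRight φ t := by
  induction t with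
  | zero => simp
  | add s t hs ht => simp only [mul_add, map_add, hs, ht]
  | tmul y z => simp

theorem sliceLeft_mul_one_tmul (φ : ConvDual k H) (t : H ⊗[k] H) (x : H) :
    sliceLeft φ (t * (1 ⊗ₜ x)) = sliceLeft φ t * x := by
  induction t with
  | zero => simp
  | add s t hs ht => simp only [add_mul, map_add, hs, ht]
  | tmul y z => simp

/-- The left hit action `a ⇀ φ` of `H` on its dual. -/
noncomputable def leftHit (a : H) (φ : ConvDual k H) : ConvDual k H :=
  (toDual k H).symm (toDual k H φ ∘ₗ LinearMap.mulRight k a)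

@[simp] theorem leftHit_apply (a : H) (φ : ConvDual k H) (x : H) :
    leftHit a φ x = φ (x * a) := rfl

theorem leftHit_mul {g : H} (hg : IsGroupLikeElem k g) (φ ψ : ConvDual k H) :
    leftHit g (φ * ψ) = leftHit g φ * leftHit g ψ := by
  ext x
  rw [leftHit_apply, mul_apply, mul_apply, Bialgebra.comul_mul, hg.comul_eq_tmul_self]
  generalize comul (R := k) x = t
  induction t with
  | zero => simp
  | add s t hs ht => simp only [add_mul, map_add, hs, ht]
  | tmul y z => simp

end ConvDual

open ConvDual

variable (k H) in
/-- The square of the antipode, as an algebra endomorphism. -/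
noncomputable def antipodeSq : H →ₐ[k] H :=
  .ofLinearMap (antipode k ∘ₗ antipode k) (by simp) fun x y => by
    simp [antipode_mul_antidistrib]

@[simp] theorem antipodeSq_apply (x : H) : antipodeSq k H x = antipode k (antipode k x) := rfl

theorem comul_antipodeSq (x : H) : comul (R := k) (antipodeSq k H x) =
    TensorProduct.map (antipodeSq k H).toLinearMap (antipodeSq k H).toLinearMap (comul x) := by
  rw [antipodeSq_apply, comul_antipode, comul_antipode]
  generalize comul (R := k) x = t
  induction t with
  | zero => simp
  | add s t hs ht => simp only [map_add, hs, ht]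
  | tmul y z => simp

theorem sum_one_tmul_antipode_mul_comul_antipodeSq (x : H) :
    ∑ i ∈ (ℛ k x).index, ((1 : H) ⊗ₜ[k] antipode k ((ℛ k x).right i)) *
      comul (antipodeSq k H ((ℛ k x).left i)) = antipodeSq k H x ⊗ₜ 1 := by
  have hmap (t : H ⊗[k] H) (r : H) :
      TensorProduct.map (antipodeSq k H).toLinearMap (antipode k)
        ((antipode k).lTensor H t * ((1 : H) ⊗ₜ[k] r)) =
      ((1 : H) ⊗ₜ[k] antipode k r) *
        TensorProduct.map (antipodeSq k H).toLinearMap (antipodeSq k H).toLinearMap t := by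
    induction t with
    | zero => simp
    | add s t hs ht => simp only [add_mul, mul_add, map_add, hs, ht]
    | tmul y z => simp [antipode_mul_antidistrib]
  simp only [comul_antipodeSq, ← hmap]
  rw [← map_sum, sum_lTensor_antipode_comul_mul]
  simp

/-- The operator `x ↦ ∑ (id ⊗ φ) ((1 ⊗ S x₂) * Δ (T x₁))`. -/
noncomputable def antipodeTwist (φ : ConvDual k H) (T : Module.End k H) : Module.End k H :=
  TensorProduct.lift (((LinearMap.mul k (H ⊗[k] H)).flip.compl₁₂ comul
    (TensorProduct.mk k H H 1 ∘ₗ antipode k)).compr₂ (sliceRight φ)) ∘ₗ T.rTensor H ∘ₗ comul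

theorem antipodeTwist_apply (φ : ConvDual k H) (T : Module.End k H) (x : H) :
    antipodeTwist φ T x = ∑ i ∈ (ℛ k x).index, sliceRight φ
      (((1 : H) ⊗ₜ[k] antipode k ((ℛ k x).right i)) * comul (T ((ℛ k x).left i))) := by
  rw [antipodeTwist, LinearMap.comp_apply, LinearMap.comp_apply, ← (ℛ k x).eq]
  simp

theorem antipodeTwist_dualTensorHom (φ ψ : ConvDual k H) (v : H) :
    antipodeTwist φ (dualTensorHom k H H (toDual k H ψ ⊗ₜ v)) =
      ∑ j ∈ (ℛ k v).index, ((toDual k H φ ∘ₗ LinearMap.mulRight k ((ℛ k v).right j) ∘ₗ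
        antipode k ∘ₗ sliceLeft ψ ∘ₗ comul).smulRight ((ℛ k v).left j)) := by
  ext x
  rw [antipodeTwist_apply]
  simp only [dualTensorHom_apply, map_smul, ← (ℛ k v).eq, Finset.smul_sum, Finset.mul_sum, map_sum]
  rw [Finset.sum_comm]
  rw [LinearMap.sum_apply]
  refine Finset.sum_congr rfl fun j _ => ?_
  rw [LinearMap.smulRight_apply, LinearMap.comp_apply, LinearMap.comp_apply, LinearMap.comp_apply,
    LinearMap.comp_apply, ← (ℛ k x).eq]
  simp [Finset.sum_smul, smul_smul]

theorem trace_antipodeTwist [Module.Finite k H] [Module.Free k H] (φ : ConvDual k H)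
    (T : Module.End k H) :
    LinearMap.trace k H (antipodeTwist φ T) = φ 1 * LinearMap.trace k H T := by
  have hsurj : Function.Surjective (dualTensorHom k H H) := (dualTensorHomEquiv k H H).surjective
  obtain ⟨t, rfl⟩ := hsurj T
  induction t with
  | zero => simp [antipodeTwist]
  | add s t hs ht =>
    have hadd : antipodeTwist φ (dualTensorHom k H H (s + t)) =
        antipodeTwist φ (dualTensorHom k H H s) + antipodeTwist φ (dualTensorHom k H H t) := by
      simp [antipodeTwist, LinearMap.rTensor_add, LinearMap.add_comp, LinearMap.comp_add]
    rw [hadd, map_add, hs, ht, map_add, map_add, mul_add]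
  | tmul ψ v =>
    obtain ⟨ψ, rfl⟩ := (toDual k H).surjective ψ
    have hslice (t : H ⊗[k] H) (r : H) : φ (antipode k (sliceLeft ψ t) * r) =
        pairing ψ φ ((antipode k).lTensor H t * (1 ⊗ₜ r)) := by
      induction t with
      | zero => simp
      | add s t hs ht => simp only [add_mul, map_add, hs, ht]
      | tmul x y => simp
    rw [antipodeTwist_dualTensorHom, map_sum]
    simp only [LinearMap.trace_smulRight, LinearMap.comp_apply, LinearMap.mulRight_apply,
      toDual_apply, hslice]
    rw [← map_sum, sum_lTensor_antipode_comul_mul]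
    simp [mul_comm]

variable (k H) in
/-- The functional `h ↦ Tr (x ↦ S² x * h)`, a right integral of the dual. -/
noncomputable def traceForm : ConvDual k H :=
  (toDual k H).symm (LinearMap.trace k H ∘ₗ LinearMap.lcomp k H (antipodeSq k H).toLinearMap ∘ₗ
    (LinearMap.mul k H).flip)

theorem traceForm_apply (x : H) : traceForm k H x =
    LinearMap.trace k H (LinearMap.mulRight k x ∘ₗ (antipodeSq k H).toLinearMap) := rfl

theorem traceForm_one : traceForm k H 1 = LinearMap.trace k H (antipodeSq k H).toLinearMap := by
  simp [traceForm_apply]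

variable [Module.Finite k H] [Module.Free k H]

theorem traceForm_mul_comm (x y : H) :
    traceForm k H (x * y) = traceForm k H (antipodeSq k H y * x) := by
  rw [traceForm_apply, traceForm_apply, LinearMap.mulRight_mul, LinearMap.comp_assoc,
    LinearMap.trace_comp_comm']
  congr 1
  ext z
  simp [antipode_mul_antidistrib, mul_assoc]

theorem IsLeftIntegral.traceForm_apply {L : H} (hL : IsLeftIntegral k L) :
    traceForm k H L = counit (R := k) L := by
  have hsmul : LinearMap.mulRight k L ∘ₗ (antipodeSq k H).toLinearMap =
      (counit (R := k) (A := H)).smulRight L := by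
    ext x
    simp [hL _]
  rw [SemisimpleHopf.traceForm_apply, hsmul, LinearMap.trace_smulRight]

theorem isRightIntegral_traceForm : IsRightIntegral k (traceForm k H) := by
  intro φ
  ext h
  have htwist : antipodeTwist φ (LinearMap.mulRight k h ∘ₗ (antipodeSq k H).toLinearMap) =
      LinearMap.mulRight k (sliceRight φ (comul h)) ∘ₗ (antipodeSq k H).toLinearMap := by
    ext x
    simp only [antipodeTwist_apply, LinearMap.comp_apply, LinearMap.mulRight_apply,
      Bialgebra.comul_mul, ← mul_assoc, AlgHom.toLinearMap_apply]
    rw [← map_sum, ← Finset.sum_mul, sum_one_tmul_antipode_mul_comul_antipodeSq,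
      sliceRight_tmul_one_mul]
  rw [mul_apply, pairing_eq_apply_sliceRight, traceForm_apply, ← htwist, trace_antipodeTwist,
    ConvDual.smul_apply, counit_apply, traceForm_apply]

theorem IsRightIntegral.sliceLeft_comul {ν : ConvDual k H} (hν : IsRightIntegral k ν) (x : H) :
    sliceLeft ν (comul x) = ν x • 1 := by
  rw [← sub_eq_zero, ← Module.forall_dual_apply_eq_zero_iff k]
  intro φ
  obtain ⟨φ, rfl⟩ := (toDual k H).surjective φ
  rw [map_sub, toDual_apply, ← pairing_eq_apply_sliceLeft, ← mul_apply, hν]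
  simp [mul_comm]

theorem IsRightIntegral.sliceLeft_leftHit {ν : ConvDual k H} (hν : IsRightIntegral k ν)
    {L : H} (hL : IsRightIntegral k L) (a : H) :
    sliceLeft (leftHit a ν) (comul L) = ν L • antipode k a := by
  have hleftHit (t : H ⊗[k] H) : sliceLeft (leftHit a ν) t = sliceLeft ν (t * (a ⊗ₜ 1)) := by
    induction t with
    | zero => simp
    | add s t hs ht => simp only [add_mul, map_add, hs, ht]
    | tmul x y => simp
  rw [hleftHit, ← sum_comul_mul_one_tmul_antipode a, Finset.mul_sum, map_sum]
  simp only [← mul_assoc, ← Bialgebra.comul_mul, sliceLeft_mul_one_tmul, hL _, map_smul,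
    hν.sliceLeft_comul, smul_mul_assoc, one_mul]
  conv_rhs => rw [← Coalgebra.sum_counit_smul (ℛ k a)]
  simp only [map_sum, map_smul, Finset.smul_sum]
  exact Finset.sum_congr rfl fun i _ => smul_comm _ _ _

end TraceForm

/-! ### Radford's formula for the antipode -/

section Radford

open TensorProduct Coalgebra HopfAlgebra ConvDual

namespace ConvDual

variable {k H : Type*} [CommRing k] [Ring H] [HopfAlgebra k H] [Module.Finite k H] [Module.Free k H]

theorem antipode_surjective (hS : Function.Bijective (antipode k : H → H)) :
    Function.Surjective (antipode k : ConvDual k H → ConvDual k H) := by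
  intro φ
  let S := LinearEquiv.ofBijective (antipode k) hS
  refine ⟨(toDual k H).symm (toDual k H φ ∘ₗ S.symm.toLinearMap), ?_⟩
  ext x
  exact congrArg φ (S.symm_apply_apply x)

end ConvDual

theorem IsLeftIntegral.isRightIntegral {k H : Type*} [CommRing k] [Ring H] [HopfAlgebra k H]
    {L : H} (hL : IsLeftIntegral k L)
    (hS : Function.Surjective (antipode k : H → H)) (hL1 : counit (R := k) L = 1) :
    IsRightIntegral k L := by
  simpa [hL.antipode_eq hS hL1] using hL.isRightIntegral_antipode hS

variable {k H : Type*} [Field k] [Ring H] [HopfAlgebra k H] [Module.Finite k H]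

theorem eq_of_pairing_eq {s t : H ⊗[k] H}
    (h : ∀ φ ψ : ConvDual k H, pairing φ ψ s = pairing φ ψ t) : s = t := by
  rw [← sub_eq_zero, ← Module.forall_dual_apply_eq_zero_iff k]
  intro F
  obtain ⟨u, rfl⟩ := (tensorEquiv k H).surjective F
  induction u with
  | zero => simp
  | add u v hu hv => simp only [map_add, LinearMap.add_apply, hu, hv, add_zero]
  | tmul φ ψ => simp [h φ ψ]

theorem exists_isGroupLikeElem_of_algHom (Φ : ConvDual k H →ₐ[k] k) :
    ∃ g : H, IsGroupLikeElem k g ∧ ∀ φ, Φ φ = φ g := by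
  obtain ⟨g, hg⟩ := (Module.evalEquiv k H).surjective (Φ.toLinearMap ∘ₗ (toDual k H).symm)
  have hΦ (φ : ConvDual k H) : Φ φ = φ g := (LinearMap.congr_fun hg (toDual k H φ)).symm
  refine ⟨g, ⟨?_, eq_of_pairing_eq fun φ ψ => ?_⟩, hΦ⟩
  · rw [← one_apply, ← hΦ, map_one]
  · rw [← mul_apply, ← hΦ, map_mul, hΦ, hΦ, pairing_tmul]

section

variable {L : H} (hL : IsLeftIntegral k L) (hL1 : counit (R := k) L = 1)
  (hS : Function.Bijective (antipode k : H → H))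

include hL hL1 hS

theorem sliceLeft_leftHit_traceForm (a : H) :
    sliceLeft (leftHit a (traceForm k H)) (comul L) = antipode k a := by
  rw [isRightIntegral_traceForm.sliceLeft_leftHit (hL.isRightIntegral hS.surjective hL1),
    hL.traceForm_apply, hL1, one_smul]

theorem leftHit_traceForm_injective :
    Function.Injective fun a : H => leftHit a (traceForm k H) := by
  intro a b h
  apply hS.injective
  rw [← sliceLeft_leftHit_traceForm hL hL1 hS, ← sliceLeft_leftHit_traceForm hL hL1 hS b]
  exact congrArg (fun φ => sliceLeft φ (comul L)) h

theorem leftHit_traceForm_surjective :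
    Function.Surjective fun a : H => leftHit a (traceForm k H) := by
  let F : H →ₗ[k] ConvDual k H :=
    { toFun a := leftHit a (traceForm k H)
      map_add' _ _ := by ext; simp [mul_add]
      map_smul' _ _ := by ext; simp }
  exact (LinearMap.injective_iff_surjective_of_finrank_eq_finrank (f := F)
    ((toDual k H).finrank_eq.trans Subspace.dual_finrank_eq).symm).1
      (leftHit_traceForm_injective hL hL1 hS)

theorem IsRightIntegral.eq_smul_traceForm {ν : ConvDual k H} (hν : IsRightIntegral k ν) :
    ν = ν L • traceForm k H := by
  obtain ⟨a, rfl⟩ := leftHit_traceForm_surjective hL hL1 hS ν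
  have ha : antipode k a = antipode k (leftHit a (traceForm k H) L • (1 : H)) := by
    rw [← sliceLeft_leftHit_traceForm hL hL1 hS, hν.sliceLeft_comul, map_smul, antipode_one]
  ext x
  conv_lhs => rw [hS.injective ha]
  simp

theorem eq_of_traceForm_mul_eq {a b : H} (h : ∀ y, traceForm k H (a * y) = traceForm k H (b * y)) :
    a = b := by
  apply leftHit_traceForm_injective hL hL1 hS
  ext x
  obtain ⟨y, rfl⟩ := (hS.surjective.comp hS.surjective) x
  exact (traceForm_mul_comm a y).symm.trans ((h y).trans (traceForm_mul_comm b y))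

theorem exists_isGroupLikeElem_mul_traceForm :
    ∃ g : H, IsGroupLikeElem k g ∧ ∀ φ, φ * traceForm k H = φ g • traceForm k H := by
  have hmul (φ : ConvDual k H) :
      φ * traceForm k H = (φ * traceForm k H) L • traceForm k H :=
    IsRightIntegral.eq_smul_traceForm hL hL1 hS fun ψ => by
      rw [mul_assoc, isRightIntegral_traceForm, mul_smul_comm]
  let Φ : ConvDual k H →ₐ[k] k := .ofLinearMap (eval L ∘ₗ LinearMap.mulRight k (traceForm k H))
    (by simp [hL.traceForm_apply, hL1])
    fun φ ψ => by
      simp only [LinearMap.comp_apply, LinearMap.mulRight_apply, eval_apply]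
      rw [mul_assoc, hmul ψ, mul_smul_comm, ConvDual.smul_apply, ← hmul ψ, mul_comm]
  obtain ⟨g, hg, hΦ⟩ := exists_isGroupLikeElem_of_algHom Φ
  exact ⟨g, hg, fun φ => by rw [hmul φ, ← hΦ]; rfl⟩

theorem traceForm_antipode {g : H} (hg : IsGroupLikeElem k g)
    (hgmul : ∀ φ, φ * traceForm k H = φ g • traceForm k H) (x : H) :
    traceForm k H (antipode k x) = traceForm k H (g * x) := by
  have hleft : IsLeftIntegral k (leftHit g (traceForm k H)) := by
    intro φ
    have hφ : leftHit g (leftHit (antipode k g) φ) = φ := by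
      ext y
      simp [mul_assoc, hg.mul_antipode_cancel]
    rw [← hφ, ← leftHit_mul hg, hgmul]
    ext y
    simp
  have hanti : antipode k (leftHit g (traceForm k H)) = traceForm k H := by
    rw [IsRightIntegral.eq_smul_traceForm hL hL1 hS
      (hleft.isRightIntegral_antipode (antipode_surjective hS))]
    simp [hL.antipode_eq hS.surjective hL1, hL.isRightIntegral hS.surjective hL1 g,
      hg.counit_eq_one, hL.traceForm_apply, hL1]
  calc traceForm k H (antipode k x)
      = antipode k (leftHit g (traceForm k H)) (g * x) := by
        simp [antipode_mul_antidistrib, mul_assoc, hg.antipode_mul_cancel]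
    _ = traceForm k H (g * x) := by rw [hanti]

theorem exists_isGroupLikeElem_mul_eq_antipodeSq_antipodeSq_mul :
    ∃ g : H, IsGroupLikeElem k g ∧ ∀ x, g * x = antipodeSq k H (antipodeSq k H x) * g := by
  obtain ⟨g, hg, hgmul⟩ := exists_isGroupLikeElem_mul_traceForm hL hL1 hS
  have hanti := traceForm_antipode hL hL1 hS hg hgmul
  refine ⟨g, hg, fun x => eq_of_traceForm_mul_eq hL hL1 hS fun y => ?_⟩
  calc traceForm k H (g * x * y) = traceForm k H (antipode k (x * y)) := by rw [hanti, mul_assoc]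
    _ = traceForm k H (antipode k (y * antipodeSq k H x)) := by
        simp [antipode_mul_antidistrib, traceForm_mul_comm (antipode k y)]
    _ = traceForm k H (antipodeSq k H (antipodeSq k H x) * g * y) := by
        rw [hanti, ← mul_assoc, traceForm_mul_comm, mul_assoc]

theorem exists_antipodeSq_pow_eq_one : ∃ m : ℕ, 0 < m ∧ antipodeSq k H ^ m = 1 := by
  obtain ⟨g, hg, hgx⟩ := exists_isGroupLikeElem_mul_eq_antipodeSq_antipodeSq_mul hL hL1 hS
  have : Finite (GroupLike k H) := (linearIndep_groupLikeVal (R := k) (A := H)).finite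
  obtain ⟨m, hm, hgm⟩ := (isOfFinOrder_of_finite (⟨g, hg⟩ : GroupLike k H)).exists_pow_eq_one
  have hgm : g ^ m = 1 := congrArg GroupLike.val hgm
  have hpow (n : ℕ) (x : H) : g ^ n * x = (antipodeSq k H ^ (2 * n)) x * g ^ n := by
    induction n generalizing x with
    | zero => simp
    | succ n ih =>
      rw [pow_succ, mul_assoc, hgx, ← mul_assoc, ih, mul_assoc, mul_add_one, pow_add,
        pow_two (antipodeSq k H)]
      rfl
  exact ⟨2 * m, by lia, AlgHom.ext fun x => by simpa [hgm] using (hpow m x).symm⟩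

end

end Radford

/-! ### Positivity of the trace of a finite order automorphism -/

section Positivity

open Matrix ComplexOrder

section Matrix

variable {n : Type*} [Fintype n] [DecidableEq n]

theorem exists_posDef_conjTranspose_mul_mul_eq {𝕜 : Type*} [RCLike 𝕜] {u : Matrix n n 𝕜} {m : ℕ}
    (hm : 0 < m) (hu : u ^ m = 1) : ∃ P : Matrix n n 𝕜, P.PosDef ∧ uᴴ * P * u = P := by
  have hpow (k : ℕ) : Function.Injective (u ^ k).mulVec :=
    Matrix.mulVec_injective_of_isUnit ((IsUnit.of_pow_eq_one hu hm.ne').pow k)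
  refine ⟨∑ k ∈ Finset.range m, (u ^ k)ᴴ * u ^ k,
    posDef_sum (Finset.nonempty_range_iff.2 hm.ne') fun k _ =>
      .conjTranspose_mul_self _ (hpow k), ?_⟩
  have hshift (k : ℕ) : uᴴ * ((u ^ k)ᴴ * u ^ k) * u = (u ^ (k + 1))ᴴ * u ^ (k + 1) := by
    simp only [pow_succ, conjTranspose_mul, mul_assoc]
  have hcycle := (Finset.sum_range_succ' (fun k => (u ^ k)ᴴ * u ^ k) m).symm.trans
    (Finset.sum_range_succ _ m)
  rw [Finset.mul_sum, Finset.sum_mul, Finset.sum_congr rfl fun k _ => hshift k]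
  simpa [hu] using hcycle

theorem trace_eq_star_trace_of_pow_eq_one {𝕜 : Type*} [RCLike 𝕜] {u v : Matrix n n 𝕜} {m : ℕ}
    (hm : 0 < m) (hu : u ^ m = 1) (huv : u * v = 1) : v.trace = star u.trace := by
  obtain ⟨P, hP, hPu⟩ := exists_posDef_conjTranspose_mul_mul_eq hm hu
  have hPv : uᴴ * P = P * v := by
    rw [← hPu, mul_assoc _ u v, huv, mul_one, hPu]
  obtain ⟨P, rfl⟩ := hP.isUnit
  rw [← trace_conjTranspose, ← trace_units_conj P v, ← hPv, mul_assoc, P.mul_inv, mul_one]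

theorem linearMap_trace_eq_sum_single {k : Type*} [CommRing k]
    (f : Matrix n n k →ₗ[k] Matrix n n k) :
    LinearMap.trace k _ f = ∑ a, ∑ b, f (single a b 1) a b := by
  have hf : f = ∑ a, ∑ b, (entryLinearMap k k a b).smulRight (f (single a b 1)) := by
    refine ext_linearMap k fun a b => LinearMap.ext_ring ?_
    simp [single_apply, ite_and]
  conv_lhs => rw [hf]
  simp [LinearMap.trace_smulRight]

theorem trace_mulLeft_mul_mulRight {k : Type*} [CommRing k] (u v : Matrix n n k) :
    LinearMap.trace k _ (LinearMap.mulLeft k u * LinearMap.mulRight k v) = u.trace * v.trace := by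
  rw [linearMap_trace_eq_sum_single, trace, trace, Finset.sum_mul_sum]
  simp [mul_apply, single_apply, ite_and]

theorem exists_algEquiv_eq_conj {k : Type*} [Field k] (σ : Matrix n n k ≃ₐ[k] Matrix n n k) :
    ∃ u v : Matrix n n k, u * v = 1 ∧ ∀ x, σ x = u * x * v := by
  let τ : Matrix n n k ≃ₐ[k] Module.End k (n → k) := toLinAlgEquiv'
  obtain ⟨T, hT⟩ := ((τ.symm.trans σ).trans τ).eq_linearEquivConjAlgEquiv
  refine ⟨τ.symm T.toLinearMap, τ.symm T.symm.toLinearMap, ?_, fun x => τ.injective ?_⟩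
  · rw [← map_mul, Module.End.mul_eq_comp, T.comp_symm, ← Module.End.one_eq_id, map_one]
  · have hx : τ (σ x) = T.conjAlgEquiv k (τ x) := by simpa using AlgEquiv.congr_fun hT (τ x)
    simp only [hx, map_mul, AlgEquiv.apply_symm_apply]
    rfl

/- `u ^ m` is central, hence a scalar, which is normalized away by an `m`-th root. -/
theorem exists_pow_eq_one_and_eq_conj {k : Type*} [Field k] [IsAlgClosed k]
    {σ : Matrix n n k ≃ₐ[k] Matrix n n k} {m : ℕ} (hm : 0 < m) (hσ : σ ^ m = 1) :
    ∃ u v : Matrix n n k, u ^ m = 1 ∧ u * v = 1 ∧ ∀ x, σ x = u * x * v := by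
  obtain ⟨u, v, huv, hu⟩ := exists_algEquiv_eq_conj σ
  have hvu : v * u = 1 := mul_eq_one_comm.1 huv
  have hvuj (j : ℕ) : v ^ j * u ^ j = 1 := by
    rw [← Commute.mul_pow (hvu.trans huv.symm), hvu, one_pow]
  have hpow (j : ℕ) (x : Matrix n n k) : (σ ^ j) x = u ^ j * x * v ^ j := by
    induction j generalizing x with
    | zero => simp
    | succ j ih => rw [pow_succ, AlgEquiv.mul_apply, ih, hu, pow_succ u, pow_succ' v]; noncomm_ring
  have hcomm (x : Matrix n n k) : Commute x (u ^ m) := by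
    have hx := hpow m x
    rw [hσ, AlgEquiv.one_apply] at hx
    calc x * u ^ m = u ^ m * x * (v ^ m * u ^ m) := by rw [← mul_assoc, ← hx]
      _ = u ^ m * x := by rw [hvuj, mul_one]
  obtain ⟨c, hc⟩ := mem_range_scalar_of_commute_single fun i j _ => hcomm (single i j 1)
  cases isEmpty_or_nonempty n
  · exact ⟨u, v, Subsingleton.elim _ _, huv, hu⟩
  have hc0 : c ≠ 0 := by
    rintro rfl
    simpa [← hc] using hvuj m
  obtain ⟨t, ht⟩ := IsAlgClosed.exists_pow_nat_eq c⁻¹ hm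
  have ht0 : t ≠ 0 := ne_zero_pow hm.ne' (ht ▸ inv_ne_zero hc0)
  refine ⟨t • u, t⁻¹ • v, ?_, ?_, fun x => ?_⟩
  · rw [smul_pow, ht, ← hc, scalar_apply, smul_eq_diagonal_mul, diagonal_mul_diagonal]
    simp [hc0]
  · simp [huv, smul_smul, ht0]
  · simp [hu, smul_smul, ht0]

theorem linearMap_trace_nonneg_of_pow_eq_one {σ : Matrix n n ℂ →ₐ[ℂ] Matrix n n ℂ} {m : ℕ}
    (hm : 0 < m) (hσ : σ ^ m = 1) : 0 ≤ LinearMap.trace ℂ _ σ.toLinearMap := by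
  let e := AlgEquiv.algHomUnitsEquiv ℂ (Matrix n n ℂ) (Units.ofPowEqOne σ m hσ hm.ne')
  have he : e ^ m = 1 := by
    rw [← map_pow, Units.pow_ofPowEqOne, map_one]
  obtain ⟨u, v, hum, huv, hu⟩ := exists_pow_eq_one_and_eq_conj hm he
  have hσu : σ.toLinearMap = LinearMap.mulLeft ℂ u * LinearMap.mulRight ℂ v :=
    LinearMap.ext fun x => (hu x).trans (mul_assoc _ _ _)
  rw [hσu, trace_mulLeft_mul_mulRight, trace_eq_star_trace_of_pow_eq_one hm hum huv]
  exact mul_star_self_nonneg _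

end Matrix

theorem linearMap_trace_pi {k ι : Type*} [CommRing k] [Fintype ι] [DecidableEq ι] {M : ι → Type*}
    [∀ i, AddCommGroup (M i)] [∀ i, Module k (M i)] [∀ i, Module.Free k (M i)]
    [∀ i, Module.Finite k (M i)] (f : Module.End k (∀ i, M i)) :
    LinearMap.trace k _ f =
      ∑ i, LinearMap.trace k (M i) (LinearMap.proj i ∘ₗ f ∘ₗ LinearMap.single k M i) := by
  have hf : f = ∑ i, (f ∘ₗ LinearMap.single k M i) ∘ₗ LinearMap.proj i :=
    LinearMap.ext fun x => by simp [← map_sum, Finset.univ_sum_single]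
  conv_lhs => rw [hf, map_sum]
  exact Finset.sum_congr rfl fun i _ => LinearMap.trace_comp_comm' _ _

section Blocks

variable {k A ι : Type*} [Field k] [Ring A] [Algebra k A] {d : ι → ℕ}
  (e : A ≃ₐ[k] ∀ i, Matrix (Fin (d i)) (Fin (d i)) k)

theorem blockRep_surjective (i : ι) : Function.Surjective (blockRep e i) :=
  (Function.surjective_eval i).comp e.surjective

/- The kernel of a block is the radical of the form `(x, y) ↦ character e i (x * y)`, hence
preserved by `σ`. -/
theorem exists_blockRep_comp_eq {σ : A →ₐ[k] A} (hσ : Function.Surjective σ) {i : ι}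
    (hi : ∀ x, character e i (σ x) = character e i x) :
    ∃ τ : Matrix (Fin (d i)) (Fin (d i)) k →ₐ[k] Matrix (Fin (d i)) (Fin (d i)) k,
      ∀ x, τ (blockRep e i x) = blockRep e i (σ x) := by
  have hker (x : A) (hx : x ∈ RingHom.ker (blockRep e i)) : blockRep e i (σ x) = 0 := by
    refine ext_iff_trace_mul_right.2 fun M => ?_
    obtain ⟨y, rfl⟩ := (blockRep_surjective e i).comp hσ M
    rw [Function.comp_apply, ← map_mul, ← map_mul, ← character_apply, hi]
    simp [character_apply, RingHom.mem_ker.1 hx]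
  exact ⟨(Ideal.Quotient.liftₐ _ ((blockRep e i).comp σ) hker).comp
    (Ideal.quotientKerAlgEquivOfSurjective (blockRep_surjective e i)).symm.toAlgHom, fun x => by
      rw [AlgHom.comp_apply, AlgEquiv.coe_toAlgHom,
        Ideal.quotientKerAlgEquivOfSurjective_symm_apply]
      rfl⟩

theorem linearMap_trace_eq_sum_of_blockRep_comp_eq [Fintype ι] {σ : A →ₐ[k] A}
    {τ : ∀ i, Matrix (Fin (d i)) (Fin (d i)) k →ₐ[k] Matrix (Fin (d i)) (Fin (d i)) k}
    (hτ : ∀ i x, τ i (blockRep e i x) = blockRep e i (σ x)) :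
    LinearMap.trace k A σ.toLinearMap = ∑ i, LinearMap.trace k _ (τ i).toLinearMap := by
  classical
  rw [← LinearMap.trace_conj' _ e.toLinearEquiv, linearMap_trace_pi]
  refine Finset.sum_congr rfl fun i _ => congrArg _ <| LinearMap.ext fun M => ?_
  obtain ⟨x, hx⟩ : ∃ x, e x = Pi.single i M := e.surjective _
  have hM : blockRep e i x = M := by simp [blockRep, hx]
  calc blockRep e i (σ (e.symm (Pi.single i M))) = τ i M := by
        rw [← hx, e.symm_apply_apply, ← hτ, hM]

end Blocks

theorem linearMap_trace_pos_of_pow_eq_one {A ι : Type*} [Ring A] [Algebra ℂ A] [Finite ι]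
    {d : ι → ℕ} (e : A ≃ₐ[ℂ] ∀ i, Matrix (Fin (d i)) (Fin (d i)) ℂ) {σ : A →ₐ[ℂ] A} {m : ℕ}
    (hm : 0 < m) (hσ : σ ^ m = 1) (hchar : ∀ i x, character e i (σ x) = character e i x)
    {z : ι} (hz : d z = 1) : 0 < LinearMap.trace ℂ A σ.toLinearMap := by
  cases nonempty_fintype ι
  have hsurj : Function.Surjective σ := fun x =>
    ⟨(σ ^ (m - 1)) x, by rw [← AlgHom.mul_apply, mul_pow_sub_one hm.ne', hσ, AlgHom.one_apply]⟩
  choose τ hτ using fun i => exists_blockRep_comp_eq e hsurj (hchar i)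
  have hpow (i : ι) (j : ℕ) (x : A) : (τ i ^ j) (blockRep e i x) = blockRep e i ((σ ^ j) x) := by
    induction j with
    | zero => rfl
    | succ j ih => rw [pow_succ', AlgHom.mul_apply, ih, hτ, pow_succ', AlgHom.mul_apply]
  have hτm (i : ι) : τ i ^ m = 1 := AlgHom.ext fun M => by
    obtain ⟨x, rfl⟩ := blockRep_surjective e i M
    rw [hpow, hσ, AlgHom.one_apply, AlgHom.one_apply]
  have hz1 : LinearMap.trace ℂ _ (τ z).toLinearMap = 1 := by
    have : Unique (Fin (d z)) := hz ▸ inferInstance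
    have h1 (a b : Fin (d z)) : single a b (1 : ℂ) = 1 := by
      ext i j
      rw [Subsingleton.elim i a, Subsingleton.elim j b, Subsingleton.elim b a]
      simp
    simp [linearMap_trace_eq_sum_single, h1]
  rw [linearMap_trace_eq_sum_of_blockRep_comp_eq e hτ]
  exact Finset.sum_pos' (fun i _ => linearMap_trace_nonneg_of_pow_eq_one hm (hτm i))
    ⟨z, Finset.mem_univ z, hz1 ▸ one_pos⟩

theorem traceForm_one_pos {H ι : Type*} [Ring H] [HopfAlgebra ℂ H] [Finite ι] {d : ι → ℕ}
    [∀ i, NeZero (d i)] (e : H ≃ₐ[ℂ] ∀ i, Matrix (Fin (d i)) (Fin (d i)) ℂ) {z : ι}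
    (hz : irrChar e z = 1) : 0 < traceForm ℂ H 1 := by
  classical
  have : Module.Finite ℂ H := .equiv e.symm.toLinearEquiv
  obtain ⟨m, hm, hpow⟩ := exists_antipodeSq_pow_eq_one (isLeftIntegral_primitiveIdempotent e hz)
    (counit_primitiveIdempotent e hz) (antipode_bijective e hz)
  rw [traceForm_one]
  exact linearMap_trace_pos_of_pow_eq_one e hm hpow
    (fun i => DFunLike.congr_fun (antipode_antipode_irrChar e hz i))
    (dim_eq_one_of_irrChar_eq_one e hz)

end Positivity

/-! ### Maschke's theorem and duality -/

section Maschke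

open TensorProduct Coalgebra HopfAlgebra

section Averaging

variable {k A : Type*} [CommRing k] [Ring A] [Algebra k A]

/-- The average `∑ a • q (b • ·)` of a linear map `q` over a tensor `T = ∑ a ⊗ b`; averaging over
a Casimir tensor produces a module homomorphism. -/
noncomputable def average (T : A ⊗[k] A) (q : A →ₗ[k] A) : A →ₗ[k] A :=
  LinearMap.mul' k A ∘ₗ q.lTensor A ∘ₗ LinearMap.mulLeft k T ∘ₗ TensorProduct.mk k A A 1

theorem average_apply (T : A ⊗[k] A) (q : A →ₗ[k] A) (m : A) :
    average T q m = LinearMap.mul' k A (q.lTensor A (T * (1 ⊗ₜ m))) := rfl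

theorem average_mul {T : A ⊗[k] A} (hT : ∀ x : A, (x ⊗ₜ 1) * T = T * (1 ⊗ₜ[k] x)) (q : A →ₗ[k] A)
    (x m : A) : average T q (x * m) = x * average T q m := by
  have hmul (s : A ⊗[k] A) : LinearMap.mul' k A (q.lTensor A ((x ⊗ₜ 1) * s)) =
      x * LinearMap.mul' k A (q.lTensor A s) := by
    induction s with
    | zero => simp
    | add s t hs ht => simp only [mul_add, map_add, hs, ht]
    | tmul a b => simp [mul_assoc]
  rw [average_apply, average_apply, ← hmul, ← mul_assoc, hT, mul_assoc,
    Algebra.TensorProduct.tmul_mul_tmul, one_mul]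

variable {N : Submodule A A} {q : A →ₗ[k] A}

theorem average_mem (hq : ∀ x, q x ∈ N) (T : A ⊗[k] A) (m : A) : average T q m ∈ N := by
  rw [average_apply]
  induction T * (1 ⊗ₜ[k] m) with
  | zero => simp
  | add s t hs ht => simpa only [map_add] using N.add_mem hs ht
  | tmul a b => exact N.smul_mem a (hq b)

theorem average_eq_self {T : A ⊗[k] A} (hT : LinearMap.mul' k A T = 1) (hq : ∀ x ∈ N, q x = x)
    {m : A} (hm : m ∈ N) : average T q m = m := by
  have h (s : A ⊗[k] A) : average s q m = LinearMap.mul' k A s * m := by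
    induction s with
    | zero => simp [average_apply]
    | add s t hs ht => simp only [average_apply, add_mul, map_add] at hs ht ⊢; rw [hs, ht]
    | tmul a b => simp [average_apply, hq (b * m) (N.smul_mem b hm), mul_assoc]
  rw [h, hT, one_mul]

end Averaging

theorem isSemisimpleRing_of_casimir {k A : Type*} [Field k] [Ring A] [Algebra k A] {T : A ⊗[k] A}
    (hT : ∀ x : A, (x ⊗ₜ 1) * T = T * (1 ⊗ₜ[k] x)) (hT1 : LinearMap.mul' k A T = 1) :
    IsSemisimpleRing A := by
  refine (isSemisimpleModule_iff A A).2 ⟨fun N => ?_⟩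
  obtain ⟨q, hq⟩ := (N.restrictScalars k).subtype.exists_leftInverse_of_injective
    (Submodule.ker_subtype _)
  let r : A →ₗ[k] A := (N.restrictScalars k).subtype ∘ₗ q
  have hr (x : A) : r x ∈ N := (q x).2
  have hrN (x : A) (hx : x ∈ N) : r x = x :=
    congrArg Subtype.val (LinearMap.congr_fun hq ⟨x, hx⟩)
  let p : A →ₗ[A] N :=
    { toFun m := ⟨average T r m, average_mem hr T m⟩
      map_add' _ _ := Subtype.ext (map_add _ _ _)
      map_smul' x m := Subtype.ext (average_mul hT r x m) }
  exact ⟨LinearMap.ker p, LinearMap.isCompl_of_proj fun x =>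
    Subtype.ext (average_eq_self hT1 hrN x.2)⟩

theorem IsLeftIntegral.isSemisimpleRing {k H : Type*} [Field k] [Ring H] [HopfAlgebra k H] {L : H}
    (hL : IsLeftIntegral k L) (hL1 : counit (R := k) L = 1) : IsSemisimpleRing H :=
  isSemisimpleRing_of_casimir hL.casimir <| by
    rw [mul_antipode_lTensor_comul_apply, hL1, map_one]

theorem IsRightIntegral.isLeftIntegral_antipode {k H : Type*} [CommRing k] [Ring H]
    [HopfAlgebra k H] {L : H} (hL : IsRightIntegral k L)
    (hS : Function.Surjective (antipode k : H → H)) : IsLeftIntegral k (antipode k L) := by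
  intro x
  obtain ⟨y, rfl⟩ := hS x
  rw [← antipode_mul_antidistrib, hL, map_smul, counit_antipode]

theorem isSemisimpleRing_of_isRightIntegral {k H : Type*} [Field k] [Ring H] [HopfAlgebra k H]
    {L : H} (hL : IsRightIntegral k L) (hL0 : counit (R := k) L ≠ 0)
    (hS : Function.Surjective (antipode k : H → H)) : IsSemisimpleRing H := by
  have hSL := hL.isLeftIntegral_antipode hS
  refine IsLeftIntegral.isSemisimpleRing (k := k) (L := (counit (R := k) L)⁻¹ • antipode k L)
    (fun x => ?_) ?_
  · rw [mul_smul_comm, hSL, smul_comm]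
  · rw [map_smul, counit_antipode, smul_eq_mul, inv_mul_cancel₀ hL0]

section Complex

variable {H : Type*} [Ring H] [HopfAlgebra ℂ H] [Module.Finite ℂ H] [IsSemisimpleRing H]

open scoped ComplexOrder in
theorem isSemisimpleRing_convDual : IsSemisimpleRing (ConvDual ℂ H) := by
  obtain ⟨n, d, hd, ⟨e⟩⟩ := IsSemisimpleRing.exists_algEquiv_pi_matrix_of_isAlgClosed ℂ H
  obtain ⟨z, hz⟩ := exists_irrChar_eq_one e
  exact isSemisimpleRing_of_isRightIntegral isRightIntegral_traceForm
    (traceForm_one_pos e hz).ne' (ConvDual.antipode_surjective (antipode_bijective e hz))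

theorem exists_isGroupLikeElem_ne_one (h1 : 1 < Module.finrank ℂ H)
    (h60 : Module.finrank ℂ H < 60) : ∃ g : H, IsGroupLikeElem ℂ g ∧ g ≠ 1 := by
  have := isSemisimpleRing_convDual (H := H)
  have hdim : Module.finrank ℂ (ConvDual ℂ H) = Module.finrank ℂ H :=
    (ConvDual.toDual ℂ H).finrank_eq.trans Subspace.dual_finrank_eq
  obtain ⟨Φ, hΦ⟩ := exists_algHom_ne_counit (hdim ▸ h1) (hdim ▸ h60)
  obtain ⟨g, hg, hΦg⟩ := exists_isGroupLikeElem_of_algHom Φ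
  exact ⟨g, hg, fun h => hΦ <| AlgHom.ext fun φ => by rw [hΦg, h]; rfl⟩

end Complex

end Maschke

end SemisimpleHopf

open TensorProduct in
/-- A semisimple Hopf algebra over ℂ whose dimension `n` satisfies `1 < n < 60`
contains a nontrivial group-like element and admits a nontrivial one-dimensional
representation. -/
theorem semisimple_hopf_dim_lt_sixty_grouplike_and_char
    (H : Type*) [Ring H] [HopfAlgebra ℂ H]
    [FiniteDimensional ℂ H] [IsSemisimpleRing H]
    (h1 : 1 < Module.finrank ℂ H) (h60 : Module.finrank ℂ H < 60) :
    (∃ g : H, g ≠ 1 ∧ Coalgebra.comul (R := ℂ) g = g ⊗ₜ[ℂ] g ∧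
      Coalgebra.counit (R := ℂ) g = 1) ∧
    (∃ φ : H →ₐ[ℂ] ℂ, φ ≠ Bialgebra.counitAlgHom ℂ H) := by
  obtain ⟨g, hg, hg1⟩ := SemisimpleHopf.exists_isGroupLikeElem_ne_one h1 h60
  exact ⟨⟨g, hg1, hg.comul_eq_tmul_self, hg.counit_eq_one⟩,
    SemisimpleHopf.exists_algHom_ne_counit h1 h60⟩
end

section
/- Let λ and μ be roots of unity in ℂ such that (λ − μ)/4 is an algebraic integer. Then λ = μ. -/
/-!
The house of an algebraic number, the largest absolute value of its conjugates, is subadditive,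
equals `1` at roots of unity and is at least `1` at nonzero algebraic integers. A sum of `k` roots
of unity therefore has house at most `k`, so it cannot be `n > k` times a nonzero algebraic integer.
-/

open NumberField

section House

variable {K : Type*} [Field K] [NumberField K]

theorem house_eq_one_of_isOfFinOrder {ζ : K} (hζ : IsOfFinOrder ζ) : house ζ = 1 := by
  have hnorm (φ : K →+* ℂ) : ‖φ ζ‖₊ = 1 := NNReal.eq (φ.toMonoidHom.isOfFinOrder hζ).norm_eq_one
  simp only [house_eq_sup', hnorm, Finset.sup'_const, NNReal.coe_one]

theorem house_sum_le_card_of_isOfFinOrder {ι : Type*} [Fintype ι] {ζ : ι → K}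
    (hζ : ∀ i, IsOfFinOrder (ζ i)) : house (∑ i, ζ i) ≤ Fintype.card ι :=
  calc
    house (∑ i, ζ i) ≤ ∑ i, house (ζ i) := house_sum_le_sum_house _ ζ
    _ = Fintype.card ι := by simp [house_eq_one_of_isOfFinOrder (hζ _)]

theorem eq_zero_of_isIntegral_div_of_house_lt {α : K} {n : ℕ} (hα : house α < n)
    (hint : IsIntegral ℤ (α / n)) : α = 0 := by
  by_contra hα₀
  have hn : (n : K) ≠ 0 := by
    intro h
    rw [Nat.cast_eq_zero.mp h, Nat.cast_zero] at hα
    exact hα.not_ge (house_nonneg α)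
  have hhouse : 1 ≤ house (α / n) := one_le_house_of_isIntegral hint (div_ne_zero hα₀ hn)
  refine hα.not_ge ?_
  calc
    (n : ℝ) ≤ n * house (α / n) := le_mul_of_one_le_right n.cast_nonneg hhouse
    _ = house α := by rw [← house_nat_mul, mul_div_cancel₀ α hn]

end House

section CharZero

variable {F : Type*} [Field F] [CharZero F]

theorem numberField_adjoin_range_of_isOfFinOrder {ι : Type*} [Finite ι] {ζ : ι → F}
    (hζ : ∀ i, IsOfFinOrder (ζ i)) :
    NumberField (IntermediateField.adjoin ℚ (Set.range ζ)) where
  to_finiteDimensional := by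
    refine IntermediateField.finiteDimensional_adjoin ?_
    rintro _ ⟨i, rfl⟩
    exact IsIntegral.of_pow (hζ i).orderOf_pos (pow_orderOf_eq_one (ζ i) ▸ isIntegral_one)

theorem sum_eq_zero_of_isIntegral_div {ι : Type*} [Fintype ι] {ζ : ι → F}
    (hζ : ∀ i, IsOfFinOrder (ζ i)) {n : ℕ} (hn : Fintype.card ι < n)
    (hint : IsIntegral ℤ ((∑ i, ζ i) / n)) : ∑ i, ζ i = 0 := by
  let K := IntermediateField.adjoin ℚ (Set.range ζ)
  have : NumberField K := numberField_adjoin_range_of_isOfFinOrder hζ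
  let ξ (i : ι) : K := ⟨ζ i, IntermediateField.subset_adjoin ℚ _ ⟨i, rfl⟩⟩
  have hξ (i : ι) : IsOfFinOrder (ξ i) :=
    Function.Injective.isOfFinOrder_iff (f := (algebraMap K F : K →* F))
      (algebraMap K F).injective |>.mp (hζ i)
  have hsum : algebraMap K F (∑ i, ξ i) = ∑ i, ζ i := map_sum _ _ _
  have hint' : IsIntegral ℤ ((∑ i, ξ i) / n) := by
    rwa [← isIntegral_algebraMap_iff (algebraMap K F).injective, map_div₀, hsum, map_natCast]
  have hhouse : house (∑ i, ξ i) < n :=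
    (house_sum_le_card_of_isOfFinOrder hξ).trans_lt (Nat.cast_lt.mpr hn)
  rw [← hsum, eq_zero_of_isIntegral_div_of_house_lt hhouse hint', map_zero]

end CharZero

theorem isOfFinOrder_neg {R : Type*} [Monoid R] [HasDistribNeg R] {x : R} (hx : IsOfFinOrder x) :
    IsOfFinOrder (-x) := by
  refine IsOfFinOrder.of_pow (n := 2) ?_ two_ne_zero
  rw [neg_sq]
  exact hx.pow

theorem roots_of_unity_diff_div_four_integral_eq_general {F : Type*} [Field F] [CharZero F]
    {ζ η : F} (hζ : IsOfFinOrder ζ) (hη : IsOfFinOrder η) {n : ℕ} (hn : 2 < n)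
    (hint : IsIntegral ℤ ((ζ - η) / n)) : ζ = η := by
  have hsum : ∑ i, ![ζ, -η] i = ζ - η := by
    rw [Fin.sum_univ_two, sub_eq_add_neg]
    rfl
  have hfin : ∀ i, IsOfFinOrder (![ζ, -η] i) := Fin.forall_fin_two.mpr ⟨hζ, isOfFinOrder_neg hη⟩
  rw [← sub_eq_zero, ← hsum]
  exact sum_eq_zero_of_isIntegral_div hfin hn (by rwa [hsum])

/-- If `λ` and `μ` are roots of unity in ℂ and `(λ - μ) / 4` is an algebraic integer,
then `λ = μ`. -/
theorem roots_of_unity_diff_div_four_integral_eq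
    (l m : ℂ) (hl : ∃ k : ℕ, 0 < k ∧ l ^ k = 1) (hm : ∃ k : ℕ, 0 < k ∧ m ^ k = 1)
    (hint : IsIntegral ℤ ((l - m) / 4)) :
    l = m :=
  roots_of_unity_diff_div_four_integral_eq_general (isOfFinOrder_iff_pow_eq_one.mpr hl)
    (isOfFinOrder_iff_pow_eq_one.mpr hm) (n := 4) (by norm_num) (by exact_mod_cast hint)
end

section
/- Let G be a finite group whose order is squarefree. Then every 2-cocycle on G with values in ℂˣ is a coboundary: if β : G × G → ℂˣ satisfies β(g, h) · β(gh, k) = β(g, hk) · β(h, k) for all g, h, k ∈ G, then there exists a function φ : G → ℂˣ such that β(g, h) = φ(g) · φ(h) · φ(gh)⁻¹ for all g, h ∈ G. In other words, the Schur multiplier H²(G, ℂˣ) of a group of squarefree order is trivial. -/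
/-! Restriction of a 2-cocycle to a subgroup `H` followed by transfer is multiplication by
`[G : H]`, so a class that vanishes on one Sylow `p`-subgroup for every `p` has order prime to every
`p`, hence is trivial. In a group of squarefree order the Sylow subgroups are cyclic, and for a
finite cyclic group `C` acting trivially `H²(C, ℂˣ)` is the cokernel of the norm `z ↦ z ^ |C|`,
which is trivial because `ℂ` has all roots. -/

open groupCohomology

section Differential

variable {G A : Type*} [Monoid G] [AddCommGroup A] [DistribMulAction G A]

variable (G A) in
/-- The differential from 1-cochains to 2-cochains of `G` with values in `A`. Unlike
`groupCohomology.d₁₂` it puts no constraint on universes; its range is the group of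
2-coboundaries. -/
def cochainDifferential : (G → A) →+ (G × G → A) where
  toFun φ x := x.1 • φ x.2 - φ (x.1 * x.2) + φ x.1
  map_zero' := by ext; simp
  map_add' φ χ := by ext; simp only [Pi.add_apply, smul_add]; abel

theorem cochainDifferential_apply (φ : G → A) (g h : G) :
    cochainDifferential G A φ (g, h) = g • φ h - φ (g * h) + φ g := rfl

theorem mem_range_cochainDifferential {f : G × G → A} :
    f ∈ (cochainDifferential G A).range ↔ IsCoboundary₂ f :=
  exists_congr fun φ => by simp only [funext_iff, Prod.forall, cochainDifferential_apply]

theorem isCocycle₂_sub {f f' : G × G → A} (hf : IsCocycle₂ f) (hf' : IsCocycle₂ f') :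
    IsCocycle₂ (f - f') := fun g h k => by
  simp only [Pi.sub_apply, smul_sub]
  linear_combination (norm := abel) hf g h k - hf' g h k

theorem isCocycle₂_cochainDifferential (φ : G → A) : IsCocycle₂ (cochainDifferential G A φ) :=
  fun g h k => by
    simp only [cochainDifferential_apply, smul_add, smul_sub, mul_smul, mul_assoc]
    abel

end Differential

section Transfer

variable {G A : Type*} [Group G] [AddCommGroup A] [DistribMulAction G A] {f : G × G → A}
  {H : Subgroup G}

theorem exists_map_mul_eq_of_isCoboundary₂_restrict (hf : IsCocycle₂ f) {ψ : H → A}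
    (hψ : ∀ p q : H, p • ψ q - ψ (p * q) + ψ p = f (p, q)) :
    ∃ φ : G → A, ∀ (y : G) (q : H), φ (y * q) = φ y + y • ψ q - f (y, q) := by
  choose s hs using QuotientGroup.mk_out_eq_mul H
  let r (y : G) : G := (y : G ⧸ H).out
  let p (y : G) : H := (s y)⁻¹
  have r_mul_p (y : G) : r y * p y = y := by simp [r, p, hs]
  have r_mul (y : G) (q : H) : r (y * q) = r y := by
    simp only [r, QuotientGroup.mk_mul_of_mem y q.2]
  have p_mul (y : G) (q : H) : p (y * q) = p y * q := Subtype.ext <|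
    mul_left_cancel (a := r y) <| by
      rw [Subgroup.coe_mul, ← mul_assoc, r_mul_p, ← r_mul y q, r_mul_p]
  -- Prescribing `φ = 0` on the representatives `r y` forces this value at `y = r y * p y`.
  refine ⟨fun y => r y • ψ (p y) - f (r y, p y), fun y q => ?_⟩
  have cocycle := hf (r y) (p y) q
  have restrict := congrArg (r y • ·) (hψ (p y) q)
  simp only [smul_add, smul_sub, Subgroup.smul_def, smul_smul, r_mul_p] at cocycle restrict
  simp only [r_mul, p_mul, Subgroup.coe_mul]
  linear_combination (norm := abel) cocycle - restrict

theorem exists_cohomologous_right_invariant (hf : IsCocycle₂ f)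
    (hH : IsCoboundary₂ fun x : H × H => f (x.1, x.2)) :
    ∃ φ : G → A, ∀ (g y : G) (q : H),
      (f - cochainDifferential G A φ) (g, y * q) = (f - cochainDifferential G A φ) (g, y) := by
  obtain ⟨ψ, hψ⟩ := hH
  obtain ⟨φ, hφ⟩ := exists_map_mul_eq_of_isCoboundary₂_restrict hf hψ
  refine ⟨φ, fun g y q => ?_⟩
  simp only [Pi.sub_apply, cochainDifferential_apply, ← mul_assoc, hφ, smul_add, smul_sub,
    smul_smul]
  linear_combination (norm := abel) -hf g y q

theorem isCoboundary₂_index_nsmul_of_right_invariant [H.FiniteIndex] (hf : IsCocycle₂ f)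
    (hinv : ∀ (g y : G) (q : H), f (g, y * q) = f (g, y)) : IsCoboundary₂ (H.index • f) := by
  let := H.fintypeQuotientOfFiniteIndex
  let F (g : G) : G ⧸ H → A := Quotient.lift (fun y => f (g, y)) fun y z hyz => by
    simpa using (hinv g y ⟨_, QuotientGroup.leftRel_apply.1 hyz⟩).symm
  have F_cocycle (g h : G) (x : G ⧸ H) : F (g * h) x + f (g, h) = g • F h x + F g (h • x) :=
    QuotientGroup.induction_on x fun y => hf g h y
  refine ⟨fun g => ∑ x, F g x, fun g h => ?_⟩
  have sum_cocycle : ∑ x, F (g * h) x + H.index • f (g, h) = g • ∑ x, F h x + ∑ x, F g x :=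
    calc ∑ x, F (g * h) x + H.index • f (g, h)
        = ∑ x, (F (g * h) x + f (g, h)) := by
          rw [Finset.sum_add_distrib, Finset.sum_const, Finset.card_univ,
            ← Nat.card_eq_fintype_card, Subgroup.index]
      _ = g • ∑ x, F h x + ∑ x, F g (h • x) := by
          simp only [F_cocycle, Finset.sum_add_distrib, Finset.smul_sum]
      _ = g • ∑ x, F h x + ∑ x, F g x := by
          rw [(MulAction.bijective h).sum_comp (F g)]
  simp only [Pi.smul_apply]
  linear_combination (norm := abel) -sum_cocycle

theorem isCoboundary₂_index_nsmul [H.FiniteIndex] (hf : IsCocycle₂ f)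
    (hH : IsCoboundary₂ fun x : H × H => f (x.1, x.2)) : IsCoboundary₂ (H.index • f) := by
  obtain ⟨φ, hφ⟩ := exists_cohomologous_right_invariant hf hH
  have h := isCoboundary₂_index_nsmul_of_right_invariant
    (isCocycle₂_sub hf (isCocycle₂_cochainDifferential φ)) hφ
  rw [← mem_range_cochainDifferential, smul_sub] at h
  rw [← mem_range_cochainDifferential]
  simpa only [sub_add_cancel] using
    add_mem h (nsmul_mem (AddMonoidHom.mem_range.2 ⟨φ, rfl⟩) H.index)

theorem isCoboundary₂_of_forall_sylow [Finite G] (hf : IsCocycle₂ f)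
    (hP : ∀ (p : ℕ) [Fact p.Prime], ∃ P : Sylow p G, IsCoboundary₂ fun x : P × P => f (x.1, x.2)) :
    IsCoboundary₂ f := by
  let c : (G × G → A) ⧸ (cochainDifferential G A).range := f
  suffices addOrderOf c = 1 by
    rwa [AddMonoid.addOrderOf_eq_one_iff, QuotientAddGroup.eq_zero_iff,
      mem_range_cochainDifferential] at this
  refine Nat.eq_one_iff_not_exists_prime_dvd.2 fun p hp hdvd => ?_
  have : Fact p.Prime := ⟨hp⟩
  obtain ⟨P, hP⟩ := hP p
  have index_nsmul : (P : Subgroup G).index • c = 0 :=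
    (QuotientAddGroup.eq_zero_iff _).2 <|
      mem_range_cochainDifferential.2 (isCoboundary₂_index_nsmul hf hP)
  exact P.not_dvd_index (hdvd.trans (addOrderOf_dvd_of_nsmul_eq_zero index_nsmul))

end Transfer

theorem sum_range_orderOf_pow {G M : Type*} [Group G] [Fintype G] [AddCommMonoid M] {g : G}
    (hg : ∀ x, x ∈ Subgroup.zpowers g) (u : G → M) :
    ∑ i ∈ Finset.range (orderOf g), u (g ^ i) = ∑ x, u x := by
  classical
  rw [← IsCyclic.image_range_orderOf hg, Finset.sum_image]
  simpa using pow_injOn_Iio_orderOf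

section Powers

variable {G A : Type*} [Monoid G] [AddCommGroup A] [DistribMulAction G A] {f : G × G → A}

/-- A 1-cochain on the exponents of `g` whose differential is the pullback of the 2-cocycle `f`
along `k ↦ g ^ k`. The parameter `b` is its freedom, chosen to make it periodic when `g` has finite
order. -/
def powCochain (f : G × G → A) (g : G) (b : A) (k : ℕ) : A :=
  f (1, 1) + ∑ i ∈ Finset.range k, (g ^ i • b - f (g ^ i, g))

theorem powCochain_succ (f : G × G → A) (g : G) (b : A) (k : ℕ) :
    powCochain f g b (k + 1) = powCochain f g b k + (g ^ k • b - f (g ^ k, g)) := by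
  rw [powCochain, Finset.sum_range_succ, ← add_assoc, powCochain]

theorem smul_powCochain_sub_add (hf : IsCocycle₂ f) (g : G) (b : A) (i j : ℕ) :
    g ^ i • powCochain f g b j - powCochain f g b (i + j) + powCochain f g b i =
      f (g ^ i, g ^ j) := by
  induction j with
  | zero =>
    rw [add_zero, sub_add_cancel, pow_zero, map_one_snd_of_isCocycle₂ hf, powCochain,
      Finset.sum_range_zero, add_zero]
  | succ j ih =>
    have cocycle := hf (g ^ i) (g ^ j) g
    rw [← pow_add, ← pow_succ] at cocycle
    rw [← add_assoc, powCochain_succ, powCochain_succ, smul_add, smul_sub, smul_smul, ← pow_add]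
    linear_combination (norm := abel) ih + cocycle

end Powers

section Cyclic

variable {G A : Type*} [Group G] [Fintype G] [AddCommGroup A] [DistribMulAction G A]
  {f : G × G → A}

theorem smul_sum_isCocycle₂ (hf : IsCocycle₂ f) (g h : G) :
    h • ∑ x, f (x, g) = ∑ x, f (x, g) := by
  have sum_cocycle := Fintype.sum_congr _ _ fun x => hf h x g
  simp only [Finset.sum_add_distrib, ← Finset.smul_sum] at sum_cocycle
  rw [(Group.mulLeft_bijective h).sum_comp fun x => f (x, g),
    (Group.mulRight_bijective g).sum_comp fun x => f (h, x)] at sum_cocycle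
  exact (add_right_cancel sum_cocycle).symm

theorem isCoboundary₂_of_isCyclic [IsCyclic G] (hf : IsCocycle₂ f)
    (hnorm : ∀ a : A, (∀ g : G, g • a = a) → ∃ b : A, ∑ g : G, g • b = a) :
    IsCoboundary₂ f := by
  obtain ⟨g, hg⟩ := IsCyclic.exists_generator (α := G)
  obtain ⟨b, hb⟩ := hnorm _ (smul_sum_isCocycle₂ hf g)
  have powCochain_orderOf : powCochain f g b (orderOf g) = f (1, 1) := by
    rw [powCochain, sum_range_orderOf_pow hg fun x => x • b - f (x, g), Finset.sum_sub_distrib, hb,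
      sub_self, add_zero]
  have periodic : Function.Periodic (powCochain f g b) (orderOf g) := fun i => by
    have h := smul_powCochain_sub_add hf g b i (orderOf g)
    rw [powCochain_orderOf, pow_orderOf_eq_one, map_one_snd_of_isCocycle₂ hf (g ^ i)] at h
    linear_combination (norm := abel) -h
  have powCochain_congr {i j : ℕ} (h : g ^ i = g ^ j) :
      powCochain f g b i = powCochain f g b j := by
    rw [← periodic.map_mod_nat i, ← periodic.map_mod_nat j, pow_inj_mod.1 h]
  choose log pow_log using fun x =>
    (Submonoid.mem_powers_iff x g).1 (mem_powers_iff_mem_zpowers.2 (hg x))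
  refine ⟨fun x => powCochain f g b (log x), fun x y => ?_⟩
  have powCochain_log_mul : powCochain f g b (log (x * y)) = powCochain f g b (log x + log y) :=
    powCochain_congr (by rw [pow_add, pow_log, pow_log, pow_log])
  have h := smul_powCochain_sub_add hf g b (log x) (log y)
  rwa [pow_log, pow_log, ← powCochain_log_mul] at h

end Cyclic

theorem isCoboundary₂_of_isZGroup {G A : Type*} [Group G] [Finite G] [IsZGroup G] [AddCommGroup A]
    [DistribMulAction G A] (htriv : ∀ (g : G) (a : A), g • a = a)
    (hdiv : Function.Surjective fun a : A => Nat.card G • a) {f : G × G → A}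
    (hf : IsCocycle₂ f) : IsCoboundary₂ f :=
  isCoboundary₂_of_forall_sylow hf fun p _ => by
    let P : Sylow p G := default
    let := Fintype.ofFinite P
    refine ⟨P, isCoboundary₂_of_isCyclic (fun g h k => hf g h k) fun a _ => ?_⟩
    obtain ⟨c, rfl⟩ := hdiv a
    refine ⟨(P : Subgroup G).index • c, ?_⟩
    simp only [Subgroup.smul_def, htriv, Finset.sum_const, Finset.card_univ]
    rw [← Nat.card_eq_fintype_card, smul_smul, Subgroup.card_mul_index]

theorem units_pow_surjective_of_isAlgClosed (k : Type*) [Field k] [IsAlgClosed k] {n : ℕ}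
    (hn : n ≠ 0) : Function.Surjective fun u : kˣ => u ^ n := fun u => by
  obtain ⟨z, hz⟩ := IsAlgClosed.exists_pow_nat_eq (u : k) (Nat.pos_of_ne_zero hn)
  have hz0 : z ≠ 0 := fun h => u.ne_zero (by rw [← hz, h, zero_pow hn])
  exact ⟨Units.mk0 z hz0, Units.ext hz⟩

theorem squarefree_order_schur_multiplier_trivial_general {G A : Type*} [Group G] [Finite G]
    [IsZGroup G] [CommGroup A] (hA : Function.Surjective fun a : A => a ^ Nat.card G)
    (β : G → G → A) (hcocycle : ∀ g h k : G, β g h * β (g * h) k = β g (h * k) * β h k) :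
    ∃ φ : G → A, ∀ g h : G, β g h = φ g * φ h * (φ (g * h))⁻¹ := by
  let : DistribMulAction G (Additive A) := .compHom _ (1 : G →* AddMonoid.End (Additive A))
  have smul_trivial (g : G) (a : Additive A) : g • a = a := rfl
  let f (x : G × G) : Additive A := .ofMul (β x.1 x.2)
  have hf : IsCocycle₂ f := fun g h k => by
    rw [smul_trivial, add_comm, add_comm (f (h, k))]
    exact hcocycle g h k
  obtain ⟨φ, hφ⟩ : IsCoboundary₂ f := isCoboundary₂_of_isZGroup smul_trivial hA hf
  exact ⟨fun g => (φ g).toMul, fun g h => by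
    rw [← div_eq_mul_inv, mul_comm, mul_div_right_comm]
    exact (hφ g h).symm⟩

/-- The Schur multiplier of a finite group of squarefree order is trivial: every
2-cocycle on `G` with values in `ℂˣ` (trivial action) is a coboundary. -/
theorem squarefree_order_schur_multiplier_trivial
    (G : Type*) [Group G] [Fintype G] (hsf : Squarefree (Fintype.card G))
    (β : G → G → ℂˣ)
    (hcocycle : ∀ g h k : G, β g h * β (g * h) k = β g (h * k) * β h k) :
    ∃ φ : G → ℂˣ, ∀ g h : G, β g h = φ g * φ h * (φ (g * h))⁻¹ := by
  have : IsZGroup G := .of_squarefree (by rwa [Nat.card_eq_fintype_card])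
  exact squarefree_order_schur_multiplier_trivial_general
    (units_pow_surjective_of_isAlgClosed ℂ Nat.card_pos.ne') β hcocycle
end
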